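/- arXiv:1312.2917 — 2 statements merged into one kernel-verified Lean document; each statement's English description precedes it below -/
import Mathlib

section
/- Z-norm bound by the C¹ norm (Lemma 3.2(i), estimate (pi10)): For every h ∈ L²(I_δ) that is C¹ on I_{√ε/8}, one has ‖h‖_Z ≲ ε · ‖h‖_{C¹(I_{√ε/8})}. -/
noncomputable section
open Set MeasureTheory Filter Real

/-- The principal value at `α` of the integral `∫_ℝ F(β) dβ`, understood as the limit of the
integrals over `{β : r < |α − β|}` as `r → 0⁺`. -/
def pvI (F : ℝ → ℝ) (α : ℝ) : ℝ :=
  limUnder (nhdsWithin (0:ℝ) (Ioi 0)) (fun r => ∫ β in {β : ℝ | r < |α - β|}, F β)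

/-- `ψ` is a smooth even cutoff, with values in `[0,1]`, supported in `[−1,1]`,
equal to `1` on `[−1/2,1/2]`. -/
def IsCutoff (ψ : ℝ → ℝ) : Prop :=
  ContDiff ℝ (⊤ : ℕ∞) ψ ∧ (∀ x : ℝ, ψ (-x) = ψ x) ∧ (∀ x : ℝ, ψ x ∈ Icc (0:ℝ) 1) ∧
    (∀ x : ℝ, 1 < |x| → ψ x = 0) ∧ (∀ x : ℝ, |x| ≤ 1/2 → ψ x = 1)

/-- The rescaled cutoff `ψ_r(x) = ψ(x/r)`. -/
def scut (ψ : ℝ → ℝ) (r x : ℝ) : ℝ := ψ (x / r)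

/-- `X̃(α) = 2ε + f(α) + g(α)`. -/
def Xt (ε : ℝ) (f g : ℝ → ℝ) (α : ℝ) : ℝ := 2 * ε + f α + g α

/-- The operator `T_{1,f}`. -/
def T1 (ψ : ℝ → ℝ) (ε : ℝ) (f : ℝ → ℝ) (h : ℝ → ℝ) (α : ℝ) : ℝ :=
  (2 * π)⁻¹ * pvI (fun β =>
    (f α - f β) / ((α - β) ^ 2 + (f α - f β) ^ 2) * h β * scut ψ (Real.sqrt ε) (α - β)) α

/-- The operator `T_{2,f}`. -/
def T2 (ψ : ℝ → ℝ) (ε : ℝ) (f : ℝ → ℝ) (h : ℝ → ℝ) (α : ℝ) : ℝ :=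
  (2 * π)⁻¹ * pvI (fun β =>
    (α - β) / ((α - β) ^ 2 + (f α - f β) ^ 2) * h β * scut ψ (Real.sqrt ε) (α - β)) α

/-- The operator `T_{3,(f,g)}`. -/
def T3 (ψ : ℝ → ℝ) (ε : ℝ) (f g : ℝ → ℝ) (h : ℝ → ℝ) (α : ℝ) : ℝ :=
  (2 * π)⁻¹ * ∫ β : ℝ,
    (2 * ε + f α + g β) / ((α - β) ^ 2 + (2 * ε + f α + g β) ^ 2) * h β *
      scut ψ (Real.sqrt ε) (α - β)

/-- The operator `T_{4,(f,g)}`. -/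
def T4 (ψ : ℝ → ℝ) (ε : ℝ) (f g : ℝ → ℝ) (h : ℝ → ℝ) (α : ℝ) : ℝ :=
  (2 * π)⁻¹ * ∫ β : ℝ,
    (α - β) / ((α - β) ^ 2 + (2 * ε + f α + g β) ^ 2) * h β * scut ψ (Real.sqrt ε) (α - β)

/-- The kernel of the operator `H`. -/
def Hker (ψ : ℝ → ℝ) (ε : ℝ) (f g : ℝ → ℝ) (α β : ℝ) : ℝ :=
  (α - β)⁻¹ * ((Xt ε f g α) ^ 2 / ((α - β) ^ 2 + (Xt ε f g α) ^ 2)) *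
    scut ψ (Real.sqrt ε / 2 ^ 6) α * scut ψ (Real.sqrt ε / 2 ^ 6) (α - β)

/-- The kernel of the operator `M`. -/
def Mker (ψ : ℝ → ℝ) (ε : ℝ) (f g : ℝ → ℝ) (α β : ℝ) : ℝ :=
  (Xt ε f g α) / ((α - β) ^ 2 + (Xt ε f g α) ^ 2) *
    scut ψ (Real.sqrt ε / 2 ^ 6) α * scut ψ (Real.sqrt ε / 2 ^ 6) (α - β)

/-- The operator `H` (a principal value integral in the second variable of the kernel). -/
def Hop (ψ : ℝ → ℝ) (ε : ℝ) (f g : ℝ → ℝ) (h : ℝ → ℝ) (α : ℝ) : ℝ :=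
  (2 * π)⁻¹ * pvI (fun β => Hker ψ ε f g α β * h β) α

/-- The adjoint operator `H*` (integration of the kernel of `H` in its first variable). -/
def Hstar (ψ : ℝ → ℝ) (ε : ℝ) (f g : ℝ → ℝ) (φ : ℝ → ℝ) (β : ℝ) : ℝ :=
  (2 * π)⁻¹ * pvI (fun α => Hker ψ ε f g α β * φ α) β

/-- The operator `M`. -/
def Mop (ψ : ℝ → ℝ) (ε : ℝ) (f g : ℝ → ℝ) (h : ℝ → ℝ) (α : ℝ) : ℝ :=
  (2 * π)⁻¹ * ∫ β : ℝ, Mker ψ ε f g α β * h β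

/-- The adjoint operator `M*` (integration of the kernel of `M` in its first variable). -/
def Mstar (ψ : ℝ → ℝ) (ε : ℝ) (f g : ℝ → ℝ) (φ : ℝ → ℝ) (β : ℝ) : ℝ :=
  (2 * π)⁻¹ * ∫ α : ℝ, Mker ψ ε f g α β * φ α

/-- The class `C₂` of test functions: `C¹` functions compactly supported in `I_δ = (−δ,δ)` with
`|φ⁽ᵏ⁾(α)| ≤ ε/(ε^{2+k} + |α|^{2+k})` on `I_δ` for `k ∈ {0,1}`. -/
def InC2 (δ ε : ℝ) (φ : ℝ → ℝ) : Prop :=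
  ContDiff ℝ 1 φ ∧ HasCompactSupport φ ∧ tsupport φ ⊆ Ioo (-δ) δ ∧
    ∀ α ∈ Ioo (-δ) δ,
      |φ α| ≤ ε / (ε ^ 2 + |α| ^ 2) ∧ |deriv φ α| ≤ ε / (ε ^ 3 + |α| ^ 3)

/-- The standing hypotheses on `f, g : (−δ,δ) → ℝ`: they are `C⁵`, with
`‖f‖_{C³} + ‖g‖_{C³} ≤ A`, `f(0) = f'(0) = g(0) = g'(0) = 0`, and
`f(α) + g(β) ≥ −ε` for `α, β ∈ (−4√ε, 4√ε)`. -/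
def GoodFG (δ A ε : ℝ) (f g : ℝ → ℝ) : Prop :=
  ContDiffOn ℝ 5 f (Ioo (-δ) δ) ∧ ContDiffOn ℝ 5 g (Ioo (-δ) δ) ∧
    f 0 = 0 ∧ g 0 = 0 ∧
    derivWithin f (Ioo (-δ) δ) 0 = 0 ∧ derivWithin g (Ioo (-δ) δ) 0 = 0 ∧
    (∀ x ∈ Ioo (-δ) δ, ∀ i : ℕ, i ≤ 3 →
      |iteratedDerivWithin i f (Ioo (-δ) δ) x| + |iteratedDerivWithin i g (Ioo (-δ) δ) x| ≤ A) ∧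
    (∀ α ∈ Ioo (-(4 * Real.sqrt ε)) (4 * Real.sqrt ε),
      ∀ β ∈ Ioo (-(4 * Real.sqrt ε)) (4 * Real.sqrt ε), -ε ≤ f α + g β)

/-! The kernel of `H*` is `(α - β)⁻¹ F(α, α - β)`, where the profile `F` is `C¹`, compactly
supported and even in its second variable. Symmetrizing the principal value about `β`, exchanging
the integrals and translating back moves the oddness of the kernel onto `h`:
`∫ h · 2π H*φ = 2⁻¹ ∬ y⁻¹ (h(a - y) - h(a + y)) F(a, y) da dy`.
The difference quotient is at most twice the Lipschitz constant of `h`, which leaves `∬ |F|`. For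
each `a` the profile is at most `|φ(a)|` times a Poisson-type kernel of width `X̃(a)`, whose
integral in `y` is `π X̃(a)`, and `|φ| X̃` has integral `O(ε)` because `X̃(a) = O(ε + a²)` while
`|φ(a)| ≤ ε / (ε² + a²)`. -/

open Topology
open scoped NNReal

section Support

lemma hasCompactSupport_comp_of_leftInverse {X Y : Type*} [TopologicalSpace X]
    [TopologicalSpace Y] [R1Space Y] {F : X → ℝ} (hF : HasCompactSupport F) {u : Y → X} {v : X → Y}
    (hv : Continuous v) (hvu : Function.LeftInverse v u) : HasCompactSupport (F ∘ u) := by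
  refine HasCompactSupport.intro (hF.image hv) fun y hy => ?_
  by_contra hFy
  exact hy ⟨u y, subset_tsupport F hFy, hvu y⟩

lemma integrable_inv_mul_of_abs_le {X : Type*} [TopologicalSpace X] [MeasurableSpace X]
    [OpensMeasurableSpace X] {μ : Measure X} [IsFiniteMeasureOnCompacts μ] {T L u : X → ℝ}
    (hT : Continuous T) (hTc : HasCompactSupport T) (hu : Measurable u) (hL : Continuous L)
    (hL0 : ∀ x, 0 ≤ L x) (hTu : ∀ x, |T x| ≤ |u x| * L x) :
    Integrable (fun x => (u x)⁻¹ * T x) μ := by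
  have hsupp : Function.support (fun x => (u x)⁻¹ * T x) ⊆ tsupport T :=
    (Function.support_mul_subset_right _ _).trans (subset_tsupport T)
  refine (integrableOn_iff_integrable_of_support_subset hsupp).1 ?_
  refine (hL.continuousOn.integrableOn_compact' hTc (isClosed_tsupport T).measurableSet).mono'
    (hu.inv.mul hT.measurable).aestronglyMeasurable (ae_of_all _ fun x => ?_)
  rw [norm_mul, norm_inv, norm_eq_abs, norm_eq_abs]
  exact inv_mul_le_of_le_mul₀ (abs_nonneg _) (hL0 x) (hTu x)

end Support

section PrincipalValue

lemma aecover_lt_abs : AECover (volume : Measure ℝ) (𝓝[>] 0) (fun r => {y : ℝ | r < |y|}) where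
  ae_eventually_mem := by
    filter_upwards [Measure.ae_ne volume (0 : ℝ)] with y hy
    exact nhdsWithin_le_nhds (eventually_lt_nhds (abs_pos.2 hy))
  measurableSet _ := measurableSet_lt measurable_const continuous_abs.measurable

lemma setIntegral_lt_abs_eq_symmetrization {E : ℝ → ℝ} {r : ℝ}
    (hE : IntegrableOn E {y | r < |y|}) :
    ∫ y in {y : ℝ | r < |y|}, E y = 2⁻¹ * ∫ y in {y : ℝ | r < |y|}, (E y + E (-y)) := by
  have hpre : Neg.neg ⁻¹' {y : ℝ | r < |y|} = {y | r < |y|} := by ext y; simp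
  have hneg := Measure.measurePreserving_neg (volume : Measure ℝ)
  have hE' : IntegrableOn (fun y => E (-y)) {y : ℝ | r < |y|} := by
    have := (hneg.integrableOn_comp_preimage measurableEmbedding_neg).2 hE
    rwa [hpre] at this
  have hflip : ∫ y in {y : ℝ | r < |y|}, E (-y) = ∫ y in {y : ℝ | r < |y|}, E y := by
    have := hneg.setIntegral_preimage_emb measurableEmbedding_neg E {y | r < |y|}
    rwa [hpre] at this
  rw [integral_add hE hE', hflip]
  ring

lemma setIntegral_lt_abs_sub (F : ℝ → ℝ) (β r : ℝ) :
    ∫ α in {α : ℝ | r < |β - α|}, F α = ∫ y in {y : ℝ | r < |y|}, F (β + y) := by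
  have hpre : (β + ·) ⁻¹' {α : ℝ | r < |β - α|} = {y | r < |y|} := by ext y; simp
  rw [← hpre]
  exact ((measurePreserving_add_left volume β).setIntegral_preimage_emb
    (measurableEmbedding_addLeft β) F _).symm

theorem pvI_eq_integral_symmetrization {F : ℝ → ℝ} {β : ℝ}
    (hF : ∀ r > 0, IntegrableOn (fun y => F (β + y)) {y | r < |y|})
    (hS : Integrable fun y => F (β + y) + F (β - y)) :
    pvI F β = 2⁻¹ * ∫ y, (F (β + y) + F (β - y)) := by
  have hlim := (aecover_lt_abs.integral_tendsto_of_countably_generated hS).const_mul 2⁻¹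
  refine (hlim.congr' ?_).limUnder_eq
  filter_upwards [self_mem_nhdsWithin] with r hr
  rw [setIntegral_lt_abs_sub, setIntegral_lt_abs_eq_symmetrization (hF r hr)]
  simp only [sub_eq_add_neg]

theorem pvI_inv_sub_mul_of_lipschitzWith {G : ℝ → ℝ} {K : ℝ≥0} (hG : LipschitzWith K G)
    (hGc : HasCompactSupport G) (β : ℝ) :
    pvI (fun α => (α - β)⁻¹ * G (α - β)) β = 2⁻¹ * ∫ y, y⁻¹ * (G y - G (-y)) := by
  have hGneg : HasCompactSupport fun y => G (-y) :=
    hasCompactSupport_comp_of_leftInverse hGc continuous_neg neg_neg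
  have hodd : Integrable fun y => y⁻¹ * (G y - G (-y)) := by
    refine integrable_inv_mul_of_abs_le (L := fun _ => 2 * K)
      (hG.continuous.sub (hG.continuous.comp continuous_neg)) (hGc.sub hGneg) measurable_id
      continuous_const (fun _ => by positivity) fun y => ?_
    calc |G y - G (-y)| ≤ K * |y - -y| := hG.dist_le_mul y (-y)
      _ = |id y| * (2 * K) := by rw [sub_neg_eq_add, ← two_mul, abs_mul, abs_two, id]; ring
  have hsymm : ∀ y, (β + y - β)⁻¹ * G (β + y - β) + (β - y - β)⁻¹ * G (β - y - β)
      = y⁻¹ * (G y - G (-y)) := by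
    intro y
    rw [add_sub_cancel_left, sub_sub_cancel_left, inv_neg]
    ring
  rw [pvI_eq_integral_symmetrization]
  · simp only [hsymm]
  · intro r hr
    simp only [add_sub_cancel_left]
    refine (hG.continuous.integrable_of_hasCompactSupport hGc).integrableOn.bdd_mul (c := r⁻¹)
      measurable_inv.aestronglyMeasurable ?_
    filter_upwards [ae_restrict_mem (measurableSet_lt measurable_const continuous_abs.measurable)]
      with y hy
    rw [norm_inv, norm_eq_abs]
    exact inv_anti₀ hr hy.le
  · simpa only [hsymm] using hodd

end PrincipalValue

section Duality

variable {F : ℝ × ℝ → ℝ} {h : ℝ → ℝ} {K L : ℝ≥0}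

lemma pvI_inv_sub_mul_profile (hF : LipschitzWith L F) (hFc : HasCompactSupport F) (β : ℝ) :
    pvI (fun α => (α - β)⁻¹ * F (α, α - β)) β
      = 2⁻¹ * ∫ y, y⁻¹ * (F (β + y, y) - F (β - y, -y)) := by
  have hslice : LipschitzWith (L * 1) fun y => F (β + y, y) := by
    refine hF.comp ?_
    simpa using (isometry_add_left β).lipschitz.prodMk LipschitzWith.id
  have hslice_c : HasCompactSupport fun y => F (β + y, y) :=
    hasCompactSupport_comp_of_leftInverse hFc continuous_snd fun _ => rfl
  simpa only [add_sub_cancel, ← sub_eq_add_neg] using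
    pvI_inv_sub_mul_of_lipschitzWith hslice hslice_c β

lemma integrable_mul_symmetrized_profile (hF : LipschitzWith L F) (hFc : HasCompactSupport F)
    (hh : Continuous h) :
    Integrable fun p : ℝ × ℝ =>
      p.2⁻¹ * (h p.1 * (F (p.1 + p.2, p.2) - F (p.1 - p.2, -p.2))) := by
  have hplus : HasCompactSupport fun p : ℝ × ℝ => F (p.1 + p.2, p.2) :=
    hasCompactSupport_comp_of_leftInverse hFc (v := fun p => (p.1 - p.2, p.2)) (by fun_prop)
      fun p => by simp
  have hminus : HasCompactSupport fun p : ℝ × ℝ => F (p.1 - p.2, -p.2) :=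
    hasCompactSupport_comp_of_leftInverse hFc (v := fun p => (p.1 - p.2, -p.2)) (by fun_prop)
      fun p => by simp
  have hFcont := hF.continuous
  refine integrable_inv_mul_of_abs_le (L := fun p => 2 * L * |h p.1|) (by fun_prop)
    (hplus.sub hminus).mul_left measurable_snd (by fun_prop) (fun _ => by positivity) fun p => ?_
  have hdiff : |F (p.1 + p.2, p.2) - F (p.1 - p.2, -p.2)| ≤ L * (2 * |p.2|) := by
    refine (hF.dist_le_mul _ _).trans_eq ?_
    rw [Prod.dist_eq, Real.dist_eq, Real.dist_eq]
    simp only [add_sub_sub_cancel, sub_neg_eq_add, max_self, ← two_mul, abs_mul, abs_two]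
  calc |h p.1 * (F (p.1 + p.2, p.2) - F (p.1 - p.2, -p.2))|
      ≤ |h p.1| * (L * (2 * |p.2|)) := by rw [abs_mul]; gcongr
    _ = |p.2| * (2 * L * |h p.1|) := by ring

lemma integral_mul_symmetrized_profile (hF : Continuous F) (hFc : HasCompactSupport F)
    (hFe : ∀ a y, F (a, -y) = F (a, y)) (hh : Continuous h) (y : ℝ) :
    ∫ β, h β * (F (β + y, y) - F (β - y, -y)) = ∫ a, (h (a - y) - h (a + y)) * F (a, y) := by
  have hsec : HasCompactSupport fun a => F (a, y) :=
    hasCompactSupport_comp_of_leftInverse hFc continuous_fst fun _ => rfl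
  have hmul {u : ℝ → ℝ} (hu : Continuous u) : Integrable fun a => u a * F (a, y) :=
    (hu.mul (by fun_prop)).integrable_of_hasCompactSupport hsec.mul_left
  have hbwd : Integrable fun a => h (a - y) * F (a, y) := hmul (by fun_prop)
  have hfwd : Integrable fun a => h (a + y) * F (a, y) := hmul (by fun_prop)
  have hbwd' : Integrable fun β => h β * F (β + y, y) := by simpa using hbwd.comp_add_right y
  have hfwd' : Integrable fun β => h β * F (β - y, y) := by simpa using hfwd.comp_sub_right y
  simp only [hFe, mul_sub, sub_mul]
  rw [integral_sub hbwd' hfwd', integral_sub hbwd hfwd,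
    ← integral_add_right_eq_self (fun a => h (a - y) * F (a, y)) y,
    ← integral_sub_right_eq_self (fun a => h (a + y) * F (a, y)) y]
  simp only [add_sub_cancel_right, sub_add_cancel]

theorem integral_mul_pvI_eq (hF : LipschitzWith L F) (hFc : HasCompactSupport F)
    (hFe : ∀ a y, F (a, -y) = F (a, y)) (hh : Continuous h) :
    ∫ β, h β * pvI (fun α => (α - β)⁻¹ * F (α, α - β)) β
      = 2⁻¹ * ∫ y, ∫ a, y⁻¹ * ((h (a - y) - h (a + y)) * F (a, y)) := by
  calc ∫ β, h β * pvI (fun α => (α - β)⁻¹ * F (α, α - β)) β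
      = 2⁻¹ * ∫ β, ∫ y, y⁻¹ * (h β * (F (β + y, y) - F (β - y, -y))) := by
        rw [← integral_const_mul]
        refine integral_congr_ae (ae_of_all _ fun β => ?_)
        simp only [pvI_inv_sub_mul_profile hF hFc, mul_left_comm _ (h β), integral_const_mul]
    _ = 2⁻¹ * ∫ y, ∫ β, y⁻¹ * (h β * (F (β + y, y) - F (β - y, -y))) := by
        rw [integral_integral_swap (integrable_mul_symmetrized_profile hF hFc hh)]
    _ = 2⁻¹ * ∫ y, ∫ a, y⁻¹ * ((h (a - y) - h (a + y)) * F (a, y)) := by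
        simp only [integral_const_mul, integral_mul_symmetrized_profile hF.continuous hFc hFe hh]

theorem abs_integral_mul_pvI_le (hF : LipschitzWith L F) (hFc : HasCompactSupport F)
    (hFe : ∀ a y, F (a, -y) = F (a, y)) (hh : LipschitzWith K h) :
    |∫ β, h β * pvI (fun α => (α - β)⁻¹ * F (α, α - β)) β| ≤ K * ∫ p, |F p| := by
  set J : ℝ × ℝ → ℝ := fun p => p.2⁻¹ * ((h (p.1 - p.2) - h (p.1 + p.2)) * F p) with hJ
  have hFi : Integrable fun p => 2 * K * |F p| :=
    ((hF.continuous.integrable_of_hasCompactSupport hFc).abs).const_mul _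
  have hJF : ∀ p, ‖J p‖ ≤ 2 * K * |F p| := by
    intro p
    have hdiff : |h (p.1 - p.2) - h (p.1 + p.2)| ≤ K * (2 * |p.2|) := by
      refine (hh.dist_le_mul _ _).trans_eq ?_
      rw [Real.dist_eq, abs_sub_comm, add_sub_sub_cancel, ← two_mul, abs_mul, abs_two]
    rw [hJ, norm_mul, norm_inv, norm_eq_abs, norm_eq_abs, abs_mul]
    refine inv_mul_le_of_le_mul₀ (abs_nonneg _) (by positivity) ?_
    calc |h (p.1 - p.2) - h (p.1 + p.2)| * |F p| ≤ K * (2 * |p.2|) * |F p| := by gcongr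
      _ = |p.2| * (2 * K * |F p|) := by ring
  have hJi : Integrable J := by
    refine hFi.mono' (Measurable.aestronglyMeasurable ?_) (ae_of_all _ hJF)
    have hhm := hh.continuous.measurable
    have hFm := hF.continuous.measurable
    fun_prop
  have hJle : |∫ p, J p| ≤ 2 * K * ∫ p, |F p| := by
    rw [← integral_const_mul]
    exact norm_integral_le_of_norm_le hFi (ae_of_all _ hJF)
  rw [integral_mul_pvI_eq hF hFc hFe hh.continuous, ← integral_prod_symm J hJi,
    ← Measure.volume_eq_prod, abs_mul, abs_of_pos (by positivity : (0 : ℝ) < 2⁻¹)]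
  linarith

end Duality

section Profile

/-- The profile `F(a, y) = φ(a) · X(a)² / (y² + X(a)²) · ψ_ρ(a) · ψ_ρ(y)`: for `X = X̃` and
`ρ = √ε / 2⁶` the kernel of `H*` applied to `φ` is `(α - β)⁻¹ F(α, α - β)`. -/
def hilbertProfile (ψ X φ : ℝ → ℝ) (ρ : ℝ) (p : ℝ × ℝ) : ℝ :=
  φ p.1 * (X p.1 ^ 2 / (p.2 ^ 2 + X p.1 ^ 2)) * scut ψ ρ p.1 * scut ψ ρ p.2

lemma Hstar_eq_pvI_hilbertProfile (ψ : ℝ → ℝ) (ε : ℝ) (f g φ : ℝ → ℝ) (β : ℝ) :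
    Hstar ψ ε f g φ β = (2 * π)⁻¹ *
      pvI (fun α => (α - β)⁻¹ * hilbertProfile ψ (Xt ε f g) φ (√ε / 2 ^ 6) (α, α - β)) β := by
  unfold Hstar Hker hilbertProfile
  congr 2
  ext α
  ring

variable {ψ X φ : ℝ → ℝ} {ρ : ℝ}

lemma scut_eq_zero (hψ : IsCutoff ψ) (hρ : 0 < ρ) {x : ℝ} (hx : ρ < |x|) : scut ψ ρ x = 0 := by
  refine hψ.2.2.2.1 _ ?_
  rwa [abs_div, abs_of_pos hρ, one_lt_div hρ]

lemma abs_scut_le_one (hψ : IsCutoff ψ) (ρ x : ℝ) : |scut ψ ρ x| ≤ 1 := by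
  obtain ⟨hnonneg, hle⟩ := hψ.2.2.1 (x / ρ)
  exact abs_le.2 ⟨by unfold scut; linarith, hle⟩

lemma contDiff_scut (hψ : IsCutoff ψ) (ρ : ℝ) : ContDiff ℝ 1 (scut ψ ρ) :=
  (hψ.1.of_le (by exact_mod_cast le_top)).comp (contDiff_id.div_const ρ)

lemma hilbertProfile_neg_right (hψ : IsCutoff ψ) (X φ : ℝ → ℝ) (ρ a y : ℝ) :
    hilbertProfile ψ X φ ρ (a, -y) = hilbertProfile ψ X φ ρ (a, y) := by
  simp only [hilbertProfile, scut, neg_sq, neg_div, hψ.2.1]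

lemma hilbertProfile_eq_zero (hψ : IsCutoff ψ) (hρ : 0 < ρ) {p : ℝ × ℝ}
    (hp : ρ < |p.1| ∨ ρ < |p.2|) : hilbertProfile ψ X φ ρ p = 0 := by
  rcases hp with hp | hp <;> simp [hilbertProfile, scut_eq_zero hψ hρ hp]

lemma hasCompactSupport_hilbertProfile (hψ : IsCutoff ψ) (hρ : 0 < ρ) :
    HasCompactSupport (hilbertProfile ψ X φ ρ) := by
  refine HasCompactSupport.intro (K := Icc (-ρ) ρ ×ˢ Icc (-ρ) ρ) (isCompact_Icc.prod isCompact_Icc)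
    fun p hp => hilbertProfile_eq_zero hψ hρ ?_
  by_contra! hle
  exact hp ⟨abs_le.1 hle.1, abs_le.1 hle.2⟩

lemma contDiff_hilbertProfile (hψ : IsCutoff ψ) (hρ : 0 < ρ)
    (hX : ∀ a ∈ Icc (-ρ) ρ, ContDiffAt ℝ 1 X a) (hX0 : ∀ a ∈ Icc (-ρ) ρ, 0 < X a)
    (hφ : ContDiff ℝ 1 φ) : ContDiff ℝ 1 (hilbertProfile ψ X φ ρ) := by
  refine contDiff_iff_contDiffAt.2 fun p => ?_
  by_cases hp : p.1 ∈ Icc (-ρ) ρ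
  · have hXp : ContDiffAt ℝ 1 (fun q : ℝ × ℝ => X q.1) p := (hX p.1 hp).comp p contDiffAt_fst
    have hden : p.2 ^ 2 + X p.1 ^ 2 ≠ 0 := by have := hX0 p.1 hp; positivity
    exact (((hφ.contDiffAt.comp p contDiffAt_fst).mul
      ((hXp.pow 2).div ((contDiffAt_snd.pow 2).add (hXp.pow 2)) hden)).mul
        ((contDiff_scut hψ ρ).contDiffAt.comp p contDiffAt_fst)).mul
          ((contDiff_scut hψ ρ).contDiffAt.comp p contDiffAt_snd)
  · have hfar : ρ < |p.1| := not_le.1 fun hle => hp (abs_le.1 hle)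
    have hnear : ∀ᶠ q : ℝ × ℝ in 𝓝 p, ρ < |q.1| :=
      (continuous_fst.abs).continuousAt.eventually (lt_mem_nhds hfar)
    refine (contDiffAt_const (c := (0 : ℝ))).congr_of_eventuallyEq ?_
    filter_upwards [hnear] with q hq
    exact hilbertProfile_eq_zero hψ hρ (Or.inl hq)

lemma abs_hilbertProfile_le (hψ : IsCutoff ψ) (X φ : ℝ → ℝ) (ρ a y : ℝ) :
    |hilbertProfile ψ X φ ρ (a, y)| ≤ |φ a| * (X a ^ 2 / (y ^ 2 + X a ^ 2)) := by
  have hker : 0 ≤ X a ^ 2 / (y ^ 2 + X a ^ 2) := by positivity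
  simp only [hilbertProfile, abs_mul, abs_of_nonneg hker]
  have hcut_a := abs_scut_le_one hψ ρ a
  have hcut_y := abs_scut_le_one hψ ρ y
  exact (mul_le_of_le_one_right (by positivity) hcut_y).trans
    (mul_le_of_le_one_right (by positivity) hcut_a)

lemma integrable_sq_div_sq_add_sq {c : ℝ} (hc : 0 < c) :
    Integrable fun y : ℝ => c ^ 2 / (y ^ 2 + c ^ 2) := by
  refine (integrable_inv_one_add_sq.comp_div hc.ne').congr (ae_of_all _ fun y => ?_)
  field

lemma integral_sq_div_sq_add_sq {c : ℝ} (hc : 0 < c) :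
    ∫ y : ℝ, c ^ 2 / (y ^ 2 + c ^ 2) = π * c := by
  have hscale : ∀ y : ℝ, c ^ 2 / (y ^ 2 + c ^ 2) = (1 + (y / c) ^ 2)⁻¹ := fun y => by field
  simp only [hscale]
  rw [Measure.integral_comp_div (fun x => (1 + x ^ 2)⁻¹) c, integral_univ_inv_one_add_sq,
    abs_of_pos hc, smul_eq_mul, mul_comm]

lemma integral_abs_hilbertProfile_le (hψ : IsCutoff ψ) (hρ : 0 < ρ)
    (hX : ∀ a ∈ Icc (-ρ) ρ, ContDiffAt ℝ 1 X a) (hX0 : ∀ a ∈ Icc (-ρ) ρ, 0 < X a)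
    (hφ : ContDiff ℝ 1 φ) :
    ∫ p, |hilbertProfile ψ X φ ρ p| ≤ π * ∫ a in Icc (-ρ) ρ, |φ a| * X a := by
  set F := hilbertProfile ψ X φ ρ
  have hF : Integrable fun p => |F p| :=
    ((contDiff_hilbertProfile hψ hρ hX hX0 hφ).continuous.integrable_of_hasCompactSupport
      (hasCompactSupport_hilbertProfile hψ hρ)).abs
  have hsupp : ∀ a ∉ Icc (-ρ) ρ, ∫ y, |F (a, y)| = 0 := by
    intro a ha
    have hF0 : ∀ y, F (a, y) = 0 := fun y =>
      hilbertProfile_eq_zero hψ hρ (Or.inl (not_le.1 fun hle => ha (abs_le.1 hle)))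
    simp only [hF0, abs_zero, integral_zero]
  have hslice : ∀ a ∈ Icc (-ρ) ρ, ∫ y, |F (a, y)| ≤ π * (|φ a| * X a) := by
    intro a ha
    calc ∫ y, |F (a, y)| ≤ ∫ y, |φ a| * (X a ^ 2 / (y ^ 2 + X a ^ 2)) :=
          integral_mono_of_nonneg (ae_of_all _ fun y => abs_nonneg _)
            ((integrable_sq_div_sq_add_sq (hX0 a ha)).const_mul _)
            (ae_of_all _ fun y => abs_hilbertProfile_le hψ X φ ρ a y)
      _ = π * (|φ a| * X a) := by
          rw [integral_const_mul, integral_sq_div_sq_add_sq (hX0 a ha)]; ring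
  have hweight : ContinuousOn (fun a => π * (|φ a| * X a)) (Icc (-ρ) ρ) :=
    continuousOn_const.mul (hφ.continuous.abs.continuousOn.mul fun a ha =>
      (hX a ha).continuousAt.continuousWithinAt)
  calc ∫ p, |F p| = ∫ a in Icc (-ρ) ρ, ∫ y, |F (a, y)| := by
        rw [Measure.volume_eq_prod, integral_prod _ hF,
          setIntegral_eq_integral_of_forall_compl_eq_zero hsupp]
    _ ≤ ∫ a in Icc (-ρ) ρ, π * (|φ a| * X a) :=
        setIntegral_mono_on hF.integral_prod_left.integrableOn
          (hweight.integrableOn_compact isCompact_Icc) measurableSet_Icc hslice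
    _ = π * ∫ a in Icc (-ρ) ρ, |φ a| * X a := integral_const_mul _ _

end Profile

section AdjointEstimate

variable {ψ φ f g h : ℝ → ℝ} {ε : ℝ} {K : ℝ≥0}

lemma Hstar_eq_zero (hψ : IsCutoff ψ) (hε : 0 < ε) {β : ℝ} (hβ : √ε / 2 ^ 5 < |β|) :
    Hstar ψ ε f g φ β = 0 := by
  have hρ : 0 < √ε / 2 ^ 6 := by positivity
  have hprofile : ∀ α, hilbertProfile ψ (Xt ε f g) φ (√ε / 2 ^ 6) (α, α - β) = 0 := by
    refine fun α => hilbertProfile_eq_zero hψ hρ ?_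
    by_contra! hle
    have := abs_sub_abs_le_abs_sub β α
    rw [abs_sub_comm] at this
    linarith [hle.1, hle.2]
  simp only [Hstar_eq_pvI_hilbertProfile, hprofile, mul_zero, pvI, integral_zero,
    tendsto_const_nhds.limUnder_eq]

theorem abs_integral_mul_Hstar_le (hψ : IsCutoff ψ) (hε : 0 < ε)
    (hX : ∀ a ∈ Icc (-(√ε / 2 ^ 6)) (√ε / 2 ^ 6), ContDiffAt ℝ 1 (Xt ε f g) a)
    (hX0 : ∀ a ∈ Icc (-(√ε / 2 ^ 6)) (√ε / 2 ^ 6), 0 < Xt ε f g a)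
    (hφ : ContDiff ℝ 1 φ) (hh : LipschitzOnWith K h (Icc (-(√ε / 2 ^ 5)) (√ε / 2 ^ 5))) :
    |∫ α, h α * Hstar ψ ε f g φ α|
      ≤ K * (2⁻¹ * ∫ a in Icc (-(√ε / 2 ^ 6)) (√ε / 2 ^ 6), |φ a| * Xt ε f g a) := by
  have hρ : 0 < √ε / 2 ^ 6 := by positivity
  obtain ⟨k, hk, hkh⟩ := hh.extend_real
  set F := hilbertProfile ψ (Xt ε f g) φ (√ε / 2 ^ 6) with hF_def
  have hFc : HasCompactSupport F := hasCompactSupport_hilbertProfile hψ hρ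
  obtain ⟨L, hL⟩ := (contDiff_hilbertProfile hψ hρ hX hX0 hφ).lipschitzWith_of_hasCompactSupport
    hFc one_ne_zero
  have hint : ∀ β, h β * Hstar ψ ε f g φ β
      = (2 * π)⁻¹ * (k β * pvI (fun α => (α - β)⁻¹ * F (α, α - β)) β) := by
    intro β
    rw [mul_left_comm, hF_def, ← Hstar_eq_pvI_hilbertProfile]
    by_cases hβ : √ε / 2 ^ 5 < |β|
    · simp only [Hstar_eq_zero hψ hε hβ, mul_zero]
    · rw [hkh (abs_le.1 (not_lt.1 hβ))]
  simp only [hint]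
  rw [integral_const_mul, abs_mul, abs_of_pos (by positivity)]
  calc (2 * π)⁻¹ * |∫ β, k β * pvI (fun α => (α - β)⁻¹ * F (α, α - β)) β|
      ≤ (2 * π)⁻¹ * (K * ∫ p, |F p|) := by
        gcongr
        exact abs_integral_mul_pvI_le hL hFc (hilbertProfile_neg_right hψ _ _ _) hk
    _ ≤ (2 * π)⁻¹ *
          (K * (π * ∫ a in Icc (-(√ε / 2 ^ 6)) (√ε / 2 ^ 6), |φ a| * Xt ε f g a)) := by
        gcongr
        exact integral_abs_hilbertProfile_le hψ hρ hX hX0 hφ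
    _ = K * (2⁻¹ * ∫ a in Icc (-(√ε / 2 ^ 6)) (√ε / 2 ^ 6), |φ a| * Xt ε f g a) := by
        field

lemma setIntegral_abs_mul_le_of_quadratic {X : ℝ → ℝ} {A ρ : ℝ} (hε : 0 < ε) (hA : 0 ≤ A)
    (hρ : 0 ≤ ρ) (hX : ∀ a ∈ Icc (-ρ) ρ, X a ∈ Icc 0 (2 * ε + A * a ^ 2))
    (hφ : ∀ a ∈ Icc (-ρ) ρ, |φ a| ≤ ε / (ε ^ 2 + a ^ 2)) :
    ∫ a in Icc (-ρ) ρ, |φ a| * X a ≤ 2 * (π + A * ρ) * ε := by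
  have hbound : ∀ a ∈ Icc (-ρ) ρ, |φ a| * X a ≤ 2 * (ε ^ 2 / (a ^ 2 + ε ^ 2)) + A * ε := by
    intro a ha
    have hfrac : a ^ 2 / (a ^ 2 + ε ^ 2) ≤ 1 :=
      div_le_one_of_le₀ (le_add_of_nonneg_right (sq_nonneg ε)) (by positivity)
    calc |φ a| * X a ≤ ε / (ε ^ 2 + a ^ 2) * (2 * ε + A * a ^ 2) :=
          mul_le_mul (hφ a ha) (hX a ha).2 (hX a ha).1 (by positivity)
      _ = 2 * (ε ^ 2 / (a ^ 2 + ε ^ 2)) + A * ε * (a ^ 2 / (a ^ 2 + ε ^ 2)) := by field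
      _ ≤ 2 * (ε ^ 2 / (a ^ 2 + ε ^ 2)) + A * ε := by
          linarith [mul_le_of_le_one_right (show 0 ≤ A * ε by positivity) hfrac]
  have hpoisson := (integrable_sq_div_sq_add_sq hε).const_mul 2
  have hconst : IntegrableOn (fun _ : ℝ => A * ε) (Icc (-ρ) ρ) := integrableOn_const (by simp)
  calc ∫ a in Icc (-ρ) ρ, |φ a| * X a
      ≤ ∫ a in Icc (-ρ) ρ, (2 * (ε ^ 2 / (a ^ 2 + ε ^ 2)) + A * ε) := by
        refine integral_mono_of_nonneg ?_ (hpoisson.integrableOn.add hconst) ?_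
        · filter_upwards [ae_restrict_mem measurableSet_Icc] with a ha
          exact mul_nonneg (abs_nonneg _) (hX a ha).1
        · filter_upwards [ae_restrict_mem measurableSet_Icc] with a ha using hbound a ha
    _ = (∫ a in Icc (-ρ) ρ, 2 * (ε ^ 2 / (a ^ 2 + ε ^ 2))) + 2 * ρ * (A * ε) := by
        rw [integral_add hpoisson.integrableOn hconst, setIntegral_const,
          Real.volume_real_Icc_of_le (by linarith), smul_eq_mul, sub_neg_eq_add, ← two_mul]
    _ ≤ 2 * (π * ε) + 2 * ρ * (A * ε) := by
        gcongr
        rw [← integral_sq_div_sq_add_sq hε, ← integral_const_mul]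
        exact setIntegral_le_integral hpoisson (ae_of_all _ fun a => by positivity)
    _ = 2 * (π + A * ρ) * ε := by ring

end AdjointEstimate

section GoodFG

lemma abs_le_half_mul_sq_of_iteratedDerivWithin_two_le {u : ℝ → ℝ} {s : Set ℝ} {C x₀ x : ℝ}
    (hs : IsOpen s) (hs' : s.OrdConnected) (hx₀ : x₀ ∈ s) (hx : x ∈ s) (hu : ContDiffOn ℝ 2 u s)
    (hu0 : u x₀ = 0) (hu1 : derivWithin u s x₀ = 0)
    (hu2 : ∀ z ∈ s, |iteratedDerivWithin 2 u s z| ≤ C) : |u x| ≤ C / 2 * (x - x₀) ^ 2 := by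
  rcases eq_or_ne x₀ x with rfl | hne
  · simp [hu0]
  have hsub : uIcc x₀ x ⊆ s := hs'.uIcc_subset hx₀ hx
  obtain ⟨z, hz, htaylor⟩ := taylor_mean_remainder_lagrange_iteratedDeriv (n := 1) hne
    ((hu.mono hsub).of_le (by norm_num))
  have hderiv : derivWithin u (uIcc x₀ x) x₀ = 0 := by
    have hdiff : DifferentiableAt ℝ u x₀ :=
      (hu.differentiableOn two_ne_zero).differentiableAt (hs.mem_nhds hx₀)
    rw [hdiff.derivWithin (uniqueDiffOn_uIcc hne _ left_mem_uIcc), ← derivWithin_of_isOpen hs hx₀,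
      hu1]
  have hzs : z ∈ s := hsub (Ioo_subset_Icc_self hz)
  have hux : u x = iteratedDerivWithin 2 u s z * (x - x₀) ^ 2 / 2 := by
    rw [iteratedDerivWithin_of_isOpen hs hzs]
    simpa [taylorWithinEval_succ, hu0, hderiv] using htaylor
  calc |u x| = |iteratedDerivWithin 2 u s z| * (x - x₀) ^ 2 / 2 := by
        rw [hux, abs_div, abs_mul, abs_sq, abs_two]
    _ ≤ C / 2 * (x - x₀) ^ 2 := by nlinarith [hu2 z hzs, sq_nonneg (x - x₀)]

variable {δ A ε : ℝ} {f g : ℝ → ℝ}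

lemma GoodFG.contDiffOn_Xt (hfg : GoodFG δ A ε f g) : ContDiffOn ℝ 1 (Xt ε f g) (Ioo (-δ) δ) :=
  ((contDiffOn_const.add hfg.1).add hfg.2.1).of_le (by norm_num)

lemma GoodFG.le_Xt (hfg : GoodFG δ A ε f g) {α : ℝ} (hα : α ∈ Ioo (-(4 * √ε)) (4 * √ε)) :
    ε ≤ Xt ε f g α := by
  obtain ⟨-, -, -, -, -, -, -, hlow⟩ := hfg
  unfold Xt
  linarith [hlow α hα α hα]

lemma GoodFG.Xt_le (hfg : GoodFG δ A ε f g) {α : ℝ} (hα : α ∈ Ioo (-δ) δ) :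
    Xt ε f g α ≤ 2 * ε + A * α ^ 2 := by
  obtain ⟨hf, hg, hf0, hg0, hf1, hg1, hder, -⟩ := hfg
  have h0 : (0 : ℝ) ∈ Ioo (-δ) δ := by have := hα.1.trans hα.2; constructor <;> linarith
  have hf2 : |f α| ≤ A / 2 * (α - 0) ^ 2 :=
    abs_le_half_mul_sq_of_iteratedDerivWithin_two_le isOpen_Ioo ordConnected_Ioo h0 hα
      (hf.of_le (by norm_num)) hf0 hf1
      fun z hz => (le_add_of_nonneg_right (abs_nonneg _)).trans (hder z hz 2 (by norm_num))
  have hg2 : |g α| ≤ A / 2 * (α - 0) ^ 2 :=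
    abs_le_half_mul_sq_of_iteratedDerivWithin_two_le isOpen_Ioo ordConnected_Ioo h0 hα
      (hg.of_le (by norm_num)) hg0 hg1
      fun z hz => (le_add_of_nonneg_left (abs_nonneg _)).trans (hder z hz 2 (by norm_num))
  rw [sub_zero] at hf2 hg2
  unfold Xt
  linarith [le_abs_self (f α), le_abs_self (g α)]

end GoodFG

theorem Znorm_le_C1norm_general {ψ φ f g h : ℝ → ℝ} {ε A : ℝ} {K : ℝ≥0} (hψ : IsCutoff ψ)
    (hε : ε ∈ Ioc 0 1) (hA : 0 ≤ A)
    (hX : ContDiffOn ℝ 1 (Xt ε f g) (Ioo (-(√ε / 8)) (√ε / 8)))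
    (hXA : ∀ a ∈ Ioo (-(√ε / 8)) (√ε / 8), Xt ε f g a ∈ Ioc 0 (2 * ε + A * a ^ 2))
    (hφ : ContDiff ℝ 1 φ)
    (hφε : ∀ a ∈ Ioo (-(√ε / 8)) (√ε / 8), |φ a| ≤ ε / (ε ^ 2 + |a| ^ 2))
    (hh : LipschitzOnWith K h (Ioo (-(√ε / 8)) (√ε / 8))) :
    |∫ α, h α * Hstar ψ ε f g φ α| ≤ (π + A) * ε * K := by
  obtain ⟨hε0, hε1⟩ := hε
  have hs : 0 < √ε := Real.sqrt_pos.2 hε0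
  have hs1 : √ε ≤ 1 := Real.sqrt_le_one.2 hε1
  have hIcc {r : ℝ} (hr : r < √ε / 8) : Icc (-r) r ⊆ Ioo (-(√ε / 8)) (√ε / 8) :=
    Icc_subset_Ioo (neg_lt_neg hr) hr
  have hρ := hIcc (show √ε / 2 ^ 6 < √ε / 8 by linarith)
  have hweight := setIntegral_abs_mul_le_of_quadratic hε0 hA (by positivity)
    (fun a ha => Ioc_subset_Icc_self (hXA a (hρ ha)))
    (fun a ha => by simpa only [sq_abs] using hφε a (hρ ha))
  calc |∫ α, h α * Hstar ψ ε f g φ α|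
      ≤ K * (2⁻¹ * ∫ a in Icc (-(√ε / 2 ^ 6)) (√ε / 2 ^ 6), |φ a| * Xt ε f g a) :=
        abs_integral_mul_Hstar_le hψ hε0
          (fun a ha => hX.contDiffAt (isOpen_Ioo.mem_nhds (hρ ha))) (fun a ha => (hXA a (hρ ha)).1)
          hφ (hh.mono (hIcc (by linarith)))
    _ ≤ K * (2⁻¹ * (2 * (π + A * (√ε / 2 ^ 6)) * ε)) := by gcongr
    _ = (π + A * (√ε / 2 ^ 6)) * ε * K := by ring
    _ ≤ (π + A) * ε * K := by
        gcongr
        exact mul_le_of_le_one_right hA (by linarith)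

/-- **Z-norm bound by the C¹ norm (Lemma 3.2(i), estimate (3.10)).**  For `h ∈ L²(I_δ)` which is
`C¹` on `I_{√ε/8}` with `C¹` norm at most `M` there, one has `‖h‖_Z ≲ ε · M`, i.e.
`|∫ h · H*φ| ≤ C ε M` for every `φ ∈ C₂`, with `C` depending only on `A`, `δ` (and `ψ`). -/
theorem Znorm_le_C1norm (δ A : ℝ) (hδ : δ ∈ Ioc (0:ℝ) (1/100)) (hA : 1 ≤ A)
    (ψ : ℝ → ℝ) (hψ : IsCutoff ψ) :
    ∃ C : ℝ, 0 < C ∧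
      ∀ ε : ℝ, ε ∈ Ioc (0:ℝ) (δ ^ 2 / 100) →
      ∀ f g : ℝ → ℝ, GoodFG δ A ε f g →
      ∀ h : ℝ → ℝ, Measurable h → IntegrableOn (fun x => h x ^ 2) (Ioo (-δ) δ) →
        ContDiffOn ℝ 1 h (Ioo (-(Real.sqrt ε / 8)) (Real.sqrt ε / 8)) →
        ∀ M : ℝ,
          (∀ x ∈ Ioo (-(Real.sqrt ε / 8)) (Real.sqrt ε / 8),
            |h x| ≤ M ∧ |derivWithin h (Ioo (-(Real.sqrt ε / 8)) (Real.sqrt ε / 8)) x| ≤ M) →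
          ∀ φ : ℝ → ℝ, InC2 δ ε φ →
            |∫ α : ℝ, h α * Hstar ψ ε f g φ α| ≤ C * ε * M := by
  refine ⟨π + A, by positivity, fun ε hε f g hfg h _ _ hhC1 M hM φ hφ => ?_⟩
  have hs : 0 < √ε := Real.sqrt_pos.2 hε.1
  have hsδ : √ε ≤ δ := Real.sqrt_le_iff.2 ⟨hδ.1.le, by linarith [hε.2, sq_nonneg δ]⟩
  have hε1 : ε ≤ 1 := Real.sqrt_le_one.1 (by linarith [hδ.2])
  have hIδ : Ioo (-(√ε / 8)) (√ε / 8) ⊆ Ioo (-δ) δ := Ioo_subset_Ioo (by linarith) (by linarith)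
  have hIs : Ioo (-(√ε / 8)) (√ε / 8) ⊆ Ioo (-(4 * √ε)) (4 * √ε) :=
    Ioo_subset_Ioo (by linarith) (by linarith)
  have hM0 : 0 ≤ M := (abs_nonneg _).trans (hM 0 ⟨by linarith, by linarith⟩).1
  have hh : LipschitzOnWith ⟨M, hM0⟩ h (Ioo (-(√ε / 8)) (√ε / 8)) :=
    (convex_Ioo _ _).lipschitzOnWith_of_nnnorm_derivWithin_le
      (hhC1.differentiableOn one_ne_zero) fun x hx => (hM x hx).2
  exact Znorm_le_C1norm_general hψ ⟨hε.1, hε1⟩ (by linarith) (hfg.contDiffOn_Xt.mono hIδ)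
    (fun a ha => ⟨hε.1.trans_le (hfg.le_Xt (hIs ha)), hfg.Xt_le (hIδ ha)⟩)
    hφ.1 (fun a ha => (hφ.2.2.2 a (hIδ ha)).1) hh
end
end

section
/- M* preserves the class C₂ up to a constant (Lemma 3.2(ii), estimate (pi12)): There exists a constant A₁ > 0 depending only on A and δ such that A₁⁻¹ M*φ ∈ C₂ for every φ ∈ C₂; in particular, for every φ ∈ C₂ and every β with |β| ≤ √ε, one has |M*φ(β)| ≲ ε/(ε² + β²) and |(M*φ)'(β)| ≲ ε/(ε³ + |β|³). -/
noncomputable section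
open Set MeasureTheory Filter Real

/-!
In the coordinates `(a, t)` with `t = a - b`, the kernel of `M` is a Poisson kernel at a height
comparable to `ε`. It decays like `ε / (ε + |t|) ^ 2`, a derivative in `t` costs a factor
`1 / (ε + |t|)`, and a derivative in `a` costs only `1 / (ε + |a|)`, because the height is
`2 * ε + O(a ^ 2)`, with derivative `O(|a|)`, for `|a| ≤ √ε`. Since `|b| ≤ |a - b| + |a|`, one of
`a - b`, `a` has size at least `|b| / 2`; evaluating the decay there and integrating the other
factor, whose integral is at most `π`, gives the bound on `M*φ`.

For the derivative put `s = ε + |b|` and split `φ` at the scale `s`. Near the origin `ε + |a - b|`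
is at least of order `s`, so the derivative may stay on the kernel. Away from the origin `ε + |a|`
is at least of order `s`, so the derivative in `b` is traded by an integration by parts for
derivatives of `φ` and of the kernel in `a`. In both regions it costs a factor `1 / s`.
-/

section Decay

variable {ε : ℝ} {n : ℕ} {x y : ℝ}

/-- The weight `ε / (ε + |x|) ^ n`. For `n = 2, 3` it is comparable to the bounds
`ε / (ε ^ n + |x| ^ n)` of the class `C₂`; writing it with a power of `ε + |x|` makes it
multiplicative in `n` and homogeneous under changes of scale. -/
def decay (ε : ℝ) (n : ℕ) (x : ℝ) : ℝ := ε / (ε + |x|) ^ n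

lemma decay_pos (hε : 0 < ε) : 0 < decay ε n x := by
  unfold decay; positivity

lemma decay_succ : decay ε (n + 1) x = decay ε n x / (ε + |x|) := by
  rw [decay, decay, pow_succ, div_div]

lemma continuous_decay (hε : 0 < ε) : Continuous (decay ε n) :=
  continuous_const.div (by fun_prop) fun _ => by positivity

lemma decay_le_div_add (hε : 0 < ε) (hn : n ≠ 0) : decay ε n x ≤ ε / (ε ^ n + |x| ^ n) := by
  unfold decay
  gcongr
  exact pow_add_pow_le hε.le (abs_nonneg x) hn

lemma div_add_le_decay (hε : 0 < ε) :
    ε / (ε ^ n + |x| ^ n) ≤ 2 ^ (n - 1) * decay ε n x := by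
  rw [decay, ← mul_div_assoc, div_le_div_iff₀ (by positivity) (by positivity), mul_right_comm,
    mul_comm]
  gcongr
  exact add_pow_le hε.le (abs_nonneg x) n

lemma decay_le_of_scale (hε : 0 < ε) {c : ℝ} (h : ε + |y| ≤ c * (ε + |x|)) :
    decay ε n x ≤ c ^ n * decay ε n y := by
  rw [decay, decay, ← mul_div_assoc, div_le_div_iff₀ (by positivity) (by positivity),
    mul_comm (c ^ n), mul_assoc, ← mul_pow]
  gcongr

lemma decay_le_of_le_of_le {z B : ℝ} (hε : 0 < ε) (hz : ε ≤ z) (hzB : z ≤ B * ε) :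
    decay z n x ≤ B * decay ε n x := by
  rw [decay, decay, ← mul_div_assoc]
  exact div_le_div₀ (hε.le.trans (hz.trans hzB)) hzB (by positivity) (by gcongr)

lemma add_abs_le_two_mul_or (hε : 0 < ε) (a b : ℝ) :
    ε + |b| ≤ 2 * (ε + |a - b|) ∨ ε + |b| ≤ 2 * (ε + |a|) := by
  have := abs_sub_abs_le_abs_sub b a
  rw [abs_sub_comm b a] at this
  by_contra! h
  linarith

lemma decay_two_mul_decay_two_le (hε : 0 < ε) (a b : ℝ) :
    decay ε 2 (a - b) * decay ε 2 a ≤ 4 * decay ε 2 b * (decay ε 2 (a - b) + decay ε 2 a) := by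
  have ha := decay_pos (n := 2) (x := a) hε
  have hb := decay_pos (n := 2) (x := b) hε
  have hab := decay_pos (n := 2) (x := a - b) hε
  rcases add_abs_le_two_mul_or hε a b with h | h
  · have := decay_le_of_scale (n := 2) hε h
    nlinarith
  · have := decay_le_of_scale (n := 2) hε h
    nlinarith

lemma decay_two_le_cauchy (hε : 0 < ε) : decay ε 2 x ≤ ε⁻¹ * (1 + (x / ε) ^ 2)⁻¹ := by
  have h : ε⁻¹ * (1 + (x / ε) ^ 2)⁻¹ = ε / (ε ^ 2 + |x| ^ 2) := by
    rw [sq_abs]; field_simp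
  rw [h]
  exact decay_le_div_add hε two_ne_zero

lemma integrable_decay_two (hε : 0 < ε) : Integrable (decay ε 2) := by
  refine ((integrable_inv_one_add_sq.comp_div hε.ne').const_mul ε⁻¹).mono'
    (continuous_decay hε).aestronglyMeasurable (ae_of_all _ fun x => ?_)
  rw [norm_of_nonneg (decay_pos hε).le]
  exact decay_two_le_cauchy hε

lemma integral_decay_two_le (hε : 0 < ε) : ∫ x, decay ε 2 x ≤ π := by
  calc ∫ x, decay ε 2 x ≤ ∫ x, ε⁻¹ * (1 + (x / ε) ^ 2)⁻¹ :=
        integral_mono (integrable_decay_two hε)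
          ((integrable_inv_one_add_sq.comp_div hε.ne').const_mul ε⁻¹)
          fun _ => decay_two_le_cauchy hε
    _ = π := by
        rw [integral_const_mul, Measure.integral_comp_div (fun y : ℝ => (1 + y ^ 2)⁻¹),
          integral_univ_inv_one_add_sq, abs_of_pos hε, smul_eq_mul, inv_mul_cancel_left₀ hε.ne']

lemma abs_integral_le_of_abs_le_decay (hε : 0 < ε) {F : ℝ → ℝ} {b c : ℝ}
    (hF : ∀ a, |F a| ≤ c * (decay ε 2 (a - b) + decay ε 2 a)) :
    |∫ a, F a| ≤ 2 * π * c := by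
  have hc : 0 ≤ c := by
    refine nonneg_of_mul_nonneg_left ((abs_nonneg _).trans (hF 0)) ?_
    exact add_pos (decay_pos hε) (decay_pos hε)
  have hint := integrable_decay_two hε
  have hint_sub := hint.comp_sub_right b
  calc |∫ a, F a| ≤ ∫ a, c * (decay ε 2 (a - b) + decay ε 2 a) :=
        norm_integral_le_of_norm_le (f := F) ((hint_sub.add hint).const_mul c) (ae_of_all _ hF)
    _ = c * (2 * ∫ a, decay ε 2 a) := by
        rw [integral_const_mul, integral_add hint_sub hint, integral_sub_right_eq_self (decay ε 2),
          two_mul]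
    _ ≤ c * (2 * π) := by gcongr; exact integral_decay_two_le hε
    _ = 2 * π * c := mul_comm _ _

end Decay

section PartialDerivatives

variable {E : Type*} [NormedAddCommGroup E] [NormedSpace ℝ E] {K : ℝ → ℝ → E}

lemma hasFDerivAt_uncurry (hK : ContDiff ℝ 1 (Function.uncurry K)) (a t : ℝ) :
    HasFDerivAt (Function.uncurry K) (fderiv ℝ (Function.uncurry K) (a, t)) (a, t) :=
  (hK.differentiable one_ne_zero (a, t)).hasFDerivAt

lemma hasDerivAt_curry_left (hK : ContDiff ℝ 1 (Function.uncurry K)) (a t : ℝ) :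
    HasDerivAt (fun x => K x t) (fderiv ℝ (Function.uncurry K) (a, t) (1, 0)) a :=
  (hasFDerivAt_uncurry hK a t).comp_hasDerivAt (f := fun x => (x, t)) a
    ((hasDerivAt_id a).prodMk (hasDerivAt_const a t))

lemma hasDerivAt_curry_right (hK : ContDiff ℝ 1 (Function.uncurry K)) (a t : ℝ) :
    HasDerivAt (K a) (fderiv ℝ (Function.uncurry K) (a, t) (0, 1)) t :=
  (hasFDerivAt_uncurry hK a t).comp_hasDerivAt t ((hasDerivAt_const t a).prodMk (hasDerivAt_id t))

lemma hasDerivAt_curry_sub (hK : ContDiff ℝ 1 (Function.uncurry K)) (a b : ℝ) :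
    HasDerivAt (fun x => K x (x - b)) (deriv (fun x => K x (a - b)) a + deriv (K a) (a - b)) a := by
  rw [(hasDerivAt_curry_left hK a (a - b)).deriv, (hasDerivAt_curry_right hK a (a - b)).deriv,
    ← map_add, Prod.mk_add_mk, add_zero, zero_add]
  exact (hasFDerivAt_uncurry hK a (a - b)).comp_hasDerivAt a
    ((hasDerivAt_id a).prodMk ((hasDerivAt_id a).sub_const b))

lemma continuous_deriv_curry_left (hK : ContDiff ℝ 1 (Function.uncurry K)) :
    Continuous fun p : ℝ × ℝ => deriv (fun x => K x p.2) p.1 := by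
  simp_rw [(hasDerivAt_curry_left hK _ _).deriv]
  exact (hK.continuous_fderiv one_ne_zero).clm_apply continuous_const

lemma continuous_deriv_curry_right (hK : ContDiff ℝ 1 (Function.uncurry K)) :
    Continuous fun p : ℝ × ℝ => deriv (K p.1) p.2 := by
  simp_rw [(hasDerivAt_curry_right hK _ _).deriv]
  exact (hK.continuous_fderiv one_ne_zero).clm_apply continuous_const

end PartialDerivatives

section Cutoff

variable {ψ : ℝ → ℝ} {r x L : ℝ}

lemma one_lt_abs_div (hr : 0 < r) (hx : r < |x|) : 1 < |x / r| := by
  rwa [abs_div, abs_of_pos hr, one_lt_div hr]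

lemma eventually_lt_abs (hx : r < |x|) : ∀ᶠ y in nhds x, r < |y| :=
  continuous_abs.continuousAt.eventually_const_lt hx

namespace IsCutoff

lemma contDiff_scut (hψ : IsCutoff ψ) (r : ℝ) : ContDiff ℝ 1 (scut ψ r) :=
  (hψ.1.of_le (mod_cast le_top)).comp (contDiff_id.div_const r)

lemma scut_nonneg (hψ : IsCutoff ψ) : 0 ≤ scut ψ r x := (hψ.2.2.1 _).1

lemma scut_le_one (hψ : IsCutoff ψ) : scut ψ r x ≤ 1 := (hψ.2.2.1 _).2

lemma abs_scut_le_one (hψ : IsCutoff ψ) : |scut ψ r x| ≤ 1 := by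
  rw [abs_of_nonneg hψ.scut_nonneg]
  exact hψ.scut_le_one

lemma abs_one_sub_scut_le_one (hψ : IsCutoff ψ) : |1 - scut ψ r x| ≤ 1 := by
  rw [abs_of_nonneg (sub_nonneg.2 hψ.scut_le_one)]
  exact sub_le_self 1 hψ.scut_nonneg

lemma scut_eq_zero (hψ : IsCutoff ψ) (hr : 0 < r) (hx : r < |x|) : scut ψ r x = 0 :=
  hψ.2.2.2.1 _ (one_lt_abs_div hr hx)

lemma scut_eq_one (hψ : IsCutoff ψ) (hr : 0 < r) (hx : |x| ≤ r / 2) : scut ψ r x = 1 := by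
  refine hψ.2.2.2.2 _ ?_
  rw [abs_div, abs_of_pos hr, div_le_iff₀ hr]
  linarith

lemma deriv_scut_eq_zero (hψ : IsCutoff ψ) (hr : 0 < r) (hx : r < |x|) :
    deriv (scut ψ r) x = 0 := by
  have h : scut ψ r =ᶠ[nhds x] fun _ => 0 :=
    (eventually_lt_abs hx).mono fun _ => hψ.scut_eq_zero hr
  rw [h.deriv_eq, deriv_const]

lemma exists_abs_deriv_le (hψ : IsCutoff ψ) : ∃ L, ∀ x, |deriv ψ x| ≤ L := by
  refine HasCompactSupport.exists_bound_of_continuous (f := deriv ψ) (HasCompactSupport.deriv ?_)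
    (hψ.1.continuous_deriv (mod_cast le_top))
  refine HasCompactSupport.intro (isCompact_Icc (a := -1) (b := 1)) fun x hx => hψ.2.2.2.1 x ?_
  rwa [mem_Icc, ← abs_le, not_le] at hx

end IsCutoff

lemma abs_deriv_scut_le (hL : ∀ x, |deriv ψ x| ≤ L) (hr : 0 < r) :
    |deriv (scut ψ r) x| ≤ L / r := by
  have h : scut ψ r = fun y => ψ (r⁻¹ * y) := funext fun y => by rw [scut, div_eq_inv_mul]
  rw [h, deriv_comp_mul_left, smul_eq_mul, abs_mul, abs_inv, abs_of_pos hr, div_eq_inv_mul]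
  gcongr
  exact hL _

lemma IsCutoff.abs_deriv_scut_le_div_add (hψ : IsCutoff ψ) (hL : ∀ x, |deriv ψ x| ≤ L)
    {ε q : ℝ} (hε : 0 < ε) (hr : 0 < r) (hεr : ε ≤ q * r) :
    |deriv (scut ψ r) x| ≤ (1 + q) * L / (ε + |x|) := by
  have hL0 : 0 ≤ L := (abs_nonneg _).trans (hL 0)
  have hq : 0 < q := pos_of_mul_pos_left (hε.trans_le hεr) hr.le
  rcases lt_or_ge r |x| with hx | hx
  · rw [hψ.deriv_scut_eq_zero hr hx, abs_zero]
    positivity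
  · refine (abs_deriv_scut_le hL hr).trans ?_
    rw [div_le_div_iff₀ hr (by positivity), mul_comm (1 + q), mul_assoc]
    gcongr
    linarith

end Cutoff

section KernelAdjoint

variable {K : ℝ → ℝ → ℝ} {u v : ℝ → ℝ}

/-- The adjoint of the integral operator with kernel `(a, b) ↦ K a (a - b)`. The kernel is written
in the coordinates `(a, t) = (a, a - b)` because the kernel of `M` varies on the scale of the
distance to the origin in `a` at fixed `t`, but on that of the distance to the diagonal in `t`. -/
def kernelAdjoint (K : ℝ → ℝ → ℝ) (u : ℝ → ℝ) (b : ℝ) : ℝ := ∫ a, K a (a - b) * u a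

lemma continuous_kernelAdjoint (hK : Continuous (Function.uncurry K)) (hu : Continuous u)
    (hus : HasCompactSupport u) : Continuous (kernelAdjoint K u) := by
  rw [← continuousOn_univ]
  refine continuousOn_integral_of_compact_support (k := tsupport u) hus (Continuous.continuousOn ?_)
    fun _ a _ ha => by rw [image_eq_zero_of_notMem_tsupport ha, mul_zero]
  exact (hK.comp (continuous_snd.prodMk (continuous_snd.sub continuous_fst))).mul
    (hu.comp continuous_snd)

lemma continuous_curry_sub (hK : Continuous (Function.uncurry K)) (b : ℝ) :
    Continuous fun a => K a (a - b) :=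
  hK.comp (continuous_id.prodMk (continuous_sub_right b))

lemma integrable_curry_sub_mul (hK : Continuous (Function.uncurry K)) (hu : Continuous u)
    (hus : HasCompactSupport u) (b : ℝ) : Integrable fun a => K a (a - b) * u a :=
  ((continuous_curry_sub hK b).mul hu).integrable_of_hasCompactSupport hus.mul_left

lemma hasDerivAt_curry_sub_right (hK : ContDiff ℝ 1 (Function.uncurry K)) (a b : ℝ) :
    HasDerivAt (fun b => K a (a - b)) (-deriv (K a) (a - b)) b := by
  have h := (hasDerivAt_curry_right hK a (a - b)).differentiableAt.hasDerivAt
  simpa using h.comp_const_sub a b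

lemma hasDerivAt_kernelAdjoint (hK : ContDiff ℝ 1 (Function.uncurry K)) (hu : Continuous u)
    (hus : HasCompactSupport u) (b : ℝ) :
    HasDerivAt (kernelAdjoint K u) (kernelAdjoint (fun a t => -deriv (K a) t) u b) b := by
  have hK' : Continuous (Function.uncurry fun a t => -deriv (K a) t) :=
    (continuous_deriv_curry_right hK).neg
  obtain ⟨D, hD⟩ := ((isCompact_closedBall b 1).prod hus).exists_bound_of_continuousOn
    (f := fun p : ℝ × ℝ => -deriv (K p.2) (p.2 - p.1) * u p.2)
    ((hK'.comp (continuous_snd.prodMk (continuous_snd.sub continuous_fst))).mul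
      (hu.comp continuous_snd)).continuousOn
  have hbound : ∀ a, ∀ y ∈ Metric.closedBall b 1,
      ‖-deriv (K a) (a - y) * u a‖ ≤ (tsupport u).indicator (fun _ => D) a := by
    intro a y hy
    by_cases ha : a ∈ tsupport u
    · rw [indicator_of_mem ha]
      exact hD (y, a) ⟨hy, ha⟩
    · rw [indicator_of_notMem ha, image_eq_zero_of_notMem_tsupport ha, mul_zero, norm_zero]
  have hbound_int : Integrable ((tsupport u).indicator fun _ => D) :=
    (integrable_indicator_iff (isClosed_tsupport u).measurableSet).2
      (integrableOn_const hus.measure_ne_top)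
  exact (hasDerivAt_integral_of_dominated_loc_of_deriv_le
    (Metric.closedBall_mem_nhds b one_pos)
    (.of_forall fun y => (integrable_curry_sub_mul hK.continuous hu hus y).aestronglyMeasurable)
    (integrable_curry_sub_mul hK.continuous hu hus b)
    (integrable_curry_sub_mul hK' hu hus b).aestronglyMeasurable
    (ae_of_all _ hbound) hbound_int
    (ae_of_all _ fun a y _ => (hasDerivAt_curry_sub_right hK a y).mul_const (u a))).2

theorem contDiff_kernelAdjoint (hK : ContDiff ℝ 1 (Function.uncurry K)) (hu : Continuous u)
    (hus : HasCompactSupport u) : ContDiff ℝ 1 (kernelAdjoint K u) := by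
  have hderiv := hasDerivAt_kernelAdjoint hK hu hus
  refine contDiff_one_iff_deriv.2 ⟨fun b => (hderiv b).differentiableAt, ?_⟩
  rw [funext fun b => (hderiv b).deriv]
  exact continuous_kernelAdjoint (continuous_deriv_curry_right hK).neg hu hus

lemma integrable_deriv_curry_sub_mul (hK : ContDiff ℝ 1 (Function.uncurry K))
    (hv : ContDiff ℝ 1 v) (hvs : HasCompactSupport v) (b : ℝ) :
    Integrable fun a => (deriv (fun x => K x (a - b)) a + deriv (K a) (a - b)) * v a +
      K a (a - b) * deriv v a :=
  (integrable_curry_sub_mul (K := fun a t => deriv (fun x => K x t) a + deriv (K a) t)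
    ((continuous_deriv_curry_left hK).add (continuous_deriv_curry_right hK)) hv.continuous hvs
    b).add (integrable_curry_sub_mul hK.continuous hv.continuous_deriv_one hvs.deriv b)

lemma integral_deriv_curry_sub_mul_eq_zero (hK : ContDiff ℝ 1 (Function.uncurry K))
    (hv : ContDiff ℝ 1 v) (hvs : HasCompactSupport v) (b : ℝ) :
    ∫ a, (deriv (fun x => K x (a - b)) a + deriv (K a) (a - b)) * v a +
      K a (a - b) * deriv v a = 0 :=
  integral_eq_zero_of_hasDerivAt_of_integrable
    (fun a => (hasDerivAt_curry_sub hK a b).mul (hv.differentiable one_ne_zero a).hasDerivAt)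
    (integrable_deriv_curry_sub_mul hK hv hvs b)
    (integrable_curry_sub_mul hK.continuous hv.continuous hvs b)

-- Integration by parts along `a ↦ (a, a - b)` moves the derivative onto the part `v` only; for the
-- rest `u - v` it stays on the kernel.
lemma kernelAdjoint_neg_deriv_eq (hK : ContDiff ℝ 1 (Function.uncurry K)) (hu : Continuous u)
    (hus : HasCompactSupport u) (hv : ContDiff ℝ 1 v) (hvs : HasCompactSupport v) (b : ℝ) :
    kernelAdjoint (fun a t => -deriv (K a) t) u b =
      ∫ a, (deriv (K a) (a - b) * (v a - u a) +
        (deriv (fun x => K x (a - b)) a * v a + K a (a - b) * deriv v a)) := by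
  have hint := integrable_curry_sub_mul (K := fun a t => -deriv (K a) t)
    (continuous_deriv_curry_right hK).neg hu hus b
  rw [← add_zero (kernelAdjoint _ u b), ← integral_deriv_curry_sub_mul_eq_zero hK hv hvs b,
    kernelAdjoint, ← integral_add hint (integrable_deriv_curry_sub_mul hK hv hvs b)]
  exact integral_congr_ae (.of_forall fun a => by ring)

end KernelAdjoint

section DecayEstimates

/-- The class `C₂` with a constant `E`, in terms of `decay` and on the whole line: a function
concentrated at scale `ε` around the origin. -/
structure IsConcentrated (ε E : ℝ) (u : ℝ → ℝ) : Prop where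
  contDiff : ContDiff ℝ 1 u
  hasCompactSupport : HasCompactSupport u
  abs_le : ∀ a, |u a| ≤ E * decay ε 2 a
  abs_deriv_le : ∀ a, |deriv u a| ≤ E * decay ε 3 a

/-- Size and smoothness bounds at scale `ε`, shared with the Poisson kernel, for a kernel `K` in
the coordinates of `kernelAdjoint`. -/
structure IsPoissonLike (ε C : ℝ) (K : ℝ → ℝ → ℝ) : Prop where
  contDiff : ContDiff ℝ 1 (Function.uncurry K)
  abs_le : ∀ a t, |K a t| ≤ C * decay ε 2 t
  abs_deriv_left_le : ∀ a t, |deriv (fun x => K x t) a| ≤ C * decay ε 2 t / (ε + |a|)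
  abs_deriv_right_le : ∀ a t, |deriv (K a) t| ≤ C * decay ε 3 t

/-- The part of `u` away from the origin: it vanishes on `[-s / 4, s / 4]` and agrees with `u`
outside `[-s / 2, s / 2]`. -/
def outerPart (ψ : ℝ → ℝ) (s : ℝ) (u : ℝ → ℝ) (a : ℝ) : ℝ := (1 - scut ψ (s / 2) a) * u a

variable {ε C E L s a : ℝ} {K : ℝ → ℝ → ℝ} {u ψ : ℝ → ℝ}

lemma IsConcentrated.nonneg (hu : IsConcentrated ε E u) (hε : 0 < ε) : 0 ≤ E :=
  nonneg_of_mul_nonneg_left ((abs_nonneg _).trans (hu.abs_le 0)) (decay_pos hε)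

lemma IsPoissonLike.nonneg (hK : IsPoissonLike ε C K) (hε : 0 < ε) : 0 ≤ C :=
  nonneg_of_mul_nonneg_left ((abs_nonneg _).trans (hK.abs_le 0 0)) (decay_pos hε)

theorem abs_kernelAdjoint_le (hε : 0 < ε) (hK : IsPoissonLike ε C K) (hu : IsConcentrated ε E u)
    (b : ℝ) : |kernelAdjoint K u b| ≤ 2 * π * (4 * C * E * decay ε 2 b) := by
  have hC := hK.nonneg hε
  have hE := hu.nonneg hε
  refine abs_integral_le_of_abs_le_decay hε (b := b) fun a => ?_
  calc |K a (a - b) * u a| ≤ C * decay ε 2 (a - b) * (E * decay ε 2 a) := by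
        rw [abs_mul]
        exact mul_le_mul (hK.abs_le _ _) (hu.abs_le _) (abs_nonneg _)
          ((abs_nonneg _).trans (hK.abs_le a _))
    _ = C * E * (decay ε 2 (a - b) * decay ε 2 a) := by ring
    _ ≤ C * E * (4 * decay ε 2 b * (decay ε 2 (a - b) + decay ε 2 a)) :=
        mul_le_mul_of_nonneg_left (decay_two_mul_decay_two_le hε a b) (by positivity)
    _ = _ := by ring

lemma contDiff_outerPart (hψ : IsCutoff ψ) (hu : ContDiff ℝ 1 u) (s : ℝ) :
    ContDiff ℝ 1 (outerPart ψ s u) :=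
  (contDiff_const.sub (hψ.contDiff_scut _)).mul hu

lemma hasCompactSupport_outerPart (hu : HasCompactSupport u) :
    HasCompactSupport (outerPart ψ s u) := hu.mul_left

lemma abs_outerPart_le (hψ : IsCutoff ψ) : |outerPart ψ s u a| ≤ |u a| := by
  rw [outerPart, abs_mul]
  exact mul_le_of_le_one_left (abs_nonneg _) hψ.abs_one_sub_scut_le_one

lemma outerPart_eq_zero (hψ : IsCutoff ψ) (hs : 0 < s) (ha : |a| ≤ s / 4) :
    outerPart ψ s u a = 0 := by
  rw [outerPart, hψ.scut_eq_one (by positivity) (by linarith), sub_self, zero_mul]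

lemma outerPart_sub_eq_zero (hψ : IsCutoff ψ) (hs : 0 < s) (ha : s / 2 < |a|) :
    outerPart ψ s u a - u a = 0 := by
  rw [outerPart, hψ.scut_eq_zero (by positivity) ha, sub_zero, one_mul, sub_self]

lemma abs_outerPart_sub_le (hψ : IsCutoff ψ) : |outerPart ψ s u a - u a| ≤ |u a| := by
  have h : outerPart ψ s u a - u a = -(scut ψ (s / 2) a * u a) := by rw [outerPart]; ring
  rw [h, abs_neg, abs_mul]
  exact mul_le_of_le_one_left (abs_nonneg _) hψ.abs_scut_le_one

lemma deriv_outerPart_eq_zero (hψ : IsCutoff ψ) (hs : 0 < s) (ha : |a| < s / 4) :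
    deriv (outerPart ψ s u) a = 0 := by
  have h : outerPart ψ s u =ᶠ[nhds a] fun _ => 0 :=
    (continuous_abs.continuousAt.eventually_lt_const ha).mono fun _ hy =>
      outerPart_eq_zero hψ hs hy.le
  rw [h.deriv_eq, deriv_const]

lemma abs_deriv_outerPart_le_add (hψ : IsCutoff ψ) (hL : ∀ x, |deriv ψ x| ≤ L)
    (hu : DifferentiableAt ℝ u a) (hs : 0 < s) :
    |deriv (outerPart ψ s u) a| ≤ 2 * L / s * |u a| + |deriv u a| := by
  have hscut : DifferentiableAt ℝ (scut ψ (s / 2)) a :=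
    (hψ.contDiff_scut _).differentiable one_ne_zero a
  have h : deriv (outerPart ψ s u) a =
      -deriv (scut ψ (s / 2)) a * u a + (1 - scut ψ (s / 2) a) * deriv u a :=
    ((hscut.hasDerivAt.const_sub 1).mul hu.hasDerivAt).deriv
  have hL' : |deriv (scut ψ (s / 2)) a| ≤ 2 * L / s :=
    (abs_deriv_scut_le hL (half_pos hs)).trans_eq (by field_simp)
  rw [h]
  refine (abs_add_le _ _).trans (add_le_add ?_ ?_)
  · rw [abs_mul, abs_neg]
    gcongr
  · rw [abs_mul]
    exact mul_le_of_le_one_left (abs_nonneg _) hψ.abs_one_sub_scut_le_one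

lemma IsConcentrated.abs_deriv_outerPart_le (hu : IsConcentrated ε E u) (hε : 0 < ε)
    (hψ : IsCutoff ψ) (hL : ∀ x, |deriv ψ x| ≤ L) (a b : ℝ) :
    |deriv (outerPart ψ (ε + |b|) u) a| ≤ (64 + 32 * L) * E * decay ε 3 b := by
  have hE := hu.nonneg hε
  have hL0 : 0 ≤ L := (abs_nonneg _).trans (hL 0)
  have hdb := decay_pos (n := 3) (x := b) hε
  have hs : 0 < ε + |b| := by positivity
  rcases lt_or_ge |a| ((ε + |b|) / 4) with ha | ha
  · rw [deriv_outerPart_eq_zero hψ hs ha, abs_zero]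
    positivity
  · have hscale : ε + |b| ≤ 4 * (ε + |a|) := by linarith
    calc |deriv (outerPart ψ (ε + |b|) u) a|
        ≤ 2 * L / (ε + |b|) * |u a| + |deriv u a| :=
          abs_deriv_outerPart_le_add hψ hL (hu.contDiff.differentiable one_ne_zero a) hs
      _ ≤ 2 * L / (ε + |b|) * (E * (4 ^ 2 * decay ε 2 b)) + E * (4 ^ 3 * decay ε 3 b) := by
          gcongr
          · exact (hu.abs_le a).trans (by gcongr; exact decay_le_of_scale hε hscale)
          · exact (hu.abs_deriv_le a).trans (by gcongr; exact decay_le_of_scale hε hscale)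
      _ = (64 + 32 * L) * E * decay ε 3 b := by rw [decay_succ (n := 2)]; ring

lemma IsPoissonLike.abs_deriv_right_mul_inner_le (hK : IsPoissonLike ε C K)
    (hu : IsConcentrated ε E u) (hε : 0 < ε) (hψ : IsCutoff ψ) (a b : ℝ) :
    |deriv (K a) (a - b) * (outerPart ψ (ε + |b|) u a - u a)| ≤
      8 * C * E * decay ε 3 b * decay ε 2 a := by
  have hC := hK.nonneg hε
  have hE := hu.nonneg hε
  have hda := decay_pos (n := 2) (x := a) hε
  have hdb := decay_pos (n := 3) (x := b) hε
  rcases lt_or_ge ((ε + |b|) / 2) |a| with ha | ha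
  · rw [outerPart_sub_eq_zero hψ (by positivity) ha, mul_zero, abs_zero]
    positivity
  · have hscale : ε + |b| ≤ 2 * (ε + |a - b|) := by
      have := abs_sub_abs_le_abs_sub b a
      rw [abs_sub_comm b a] at this
      linarith
    have hK3 : |deriv (K a) (a - b)| ≤ C * (2 ^ 3 * decay ε 3 b) :=
      (hK.abs_deriv_right_le a _).trans (by gcongr; exact decay_le_of_scale hε hscale)
    calc |deriv (K a) (a - b) * (outerPart ψ (ε + |b|) u a - u a)|
        ≤ C * (2 ^ 3 * decay ε 3 b) * (E * decay ε 2 a) := by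
          rw [abs_mul]
          gcongr
          exact (abs_outerPart_sub_le hψ).trans (hu.abs_le a)
      _ = 8 * C * E * decay ε 3 b * decay ε 2 a := by ring

lemma IsPoissonLike.abs_deriv_left_mul_outerPart_le (hK : IsPoissonLike ε C K)
    (hu : IsConcentrated ε E u) (hε : 0 < ε) (hψ : IsCutoff ψ) (a b : ℝ) :
    |deriv (fun x => K x (a - b)) a * outerPart ψ (ε + |b|) u a| ≤
      64 * C * E * decay ε 3 b * decay ε 2 (a - b) := by
  have hC := hK.nonneg hε
  have hE := hu.nonneg hε
  have hdb := decay_pos (n := 3) (x := b) hε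
  have hdab := decay_pos (n := 2) (x := a - b) hε
  rcases le_or_gt |a| ((ε + |b|) / 4) with ha | ha
  · rw [outerPart_eq_zero hψ (by positivity) ha, mul_zero, abs_zero]
    positivity
  · have hscale : ε + |b| ≤ 4 * (ε + |a|) := by linarith
    calc |deriv (fun x => K x (a - b)) a * outerPart ψ (ε + |b|) u a|
        ≤ C * decay ε 2 (a - b) / (ε + |a|) * (E * decay ε 2 a) := by
          rw [abs_mul]
          gcongr
          · exact hK.abs_deriv_left_le a _
          · exact (abs_outerPart_le hψ).trans (hu.abs_le a)
      _ = C * decay ε 2 (a - b) * E * decay ε 3 a := by rw [decay_succ (n := 2) (x := a)]; ring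
      _ ≤ C * decay ε 2 (a - b) * E * (4 ^ 3 * decay ε 3 b) := by
          gcongr
          exact decay_le_of_scale hε hscale
      _ = 64 * C * E * decay ε 3 b * decay ε 2 (a - b) := by ring

lemma IsPoissonLike.abs_mul_deriv_outerPart_le (hK : IsPoissonLike ε C K)
    (hu : IsConcentrated ε E u) (hε : 0 < ε) (hψ : IsCutoff ψ) (hL : ∀ x, |deriv ψ x| ≤ L)
    (a b : ℝ) :
    |K a (a - b) * deriv (outerPart ψ (ε + |b|) u) a| ≤
      (64 + 32 * L) * C * E * decay ε 3 b * decay ε 2 (a - b) := by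
  calc |K a (a - b) * deriv (outerPart ψ (ε + |b|) u) a|
      ≤ C * decay ε 2 (a - b) * ((64 + 32 * L) * E * decay ε 3 b) := by
        rw [abs_mul]
        exact mul_le_mul (hK.abs_le a _) (hu.abs_deriv_outerPart_le hε hψ hL a b) (abs_nonneg _)
          ((abs_nonneg _).trans (hK.abs_le a _))
    _ = (64 + 32 * L) * C * E * decay ε 3 b * decay ε 2 (a - b) := by ring

theorem abs_deriv_kernelAdjoint_le (hε : 0 < ε) (hK : IsPoissonLike ε C K)
    (hu : IsConcentrated ε E u) (hψ : IsCutoff ψ) (hL : ∀ x, |deriv ψ x| ≤ L) (b : ℝ) :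
    |deriv (kernelAdjoint K u) b| ≤ 2 * π * ((128 + 32 * L) * C * E * decay ε 3 b) := by
  have hL0 : 0 ≤ L := (abs_nonneg _).trans (hL 0)
  have hC := hK.nonneg hε
  have hE := hu.nonneg hε
  have hdb := decay_pos (n := 3) (x := b) hε
  rw [(hasDerivAt_kernelAdjoint hK.contDiff hu.contDiff.continuous hu.hasCompactSupport b).deriv,
    kernelAdjoint_neg_deriv_eq hK.contDiff hu.contDiff.continuous hu.hasCompactSupport
      (contDiff_outerPart hψ hu.contDiff (ε + |b|))
      (hasCompactSupport_outerPart hu.hasCompactSupport)]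
  refine abs_integral_le_of_abs_le_decay hε (b := b) fun a => ?_
  have hinner := hK.abs_deriv_right_mul_inner_le hu hε hψ a b
  have hleft := hK.abs_deriv_left_mul_outerPart_le hu hε hψ a b
  have hright := hK.abs_mul_deriv_outerPart_le hu hε hψ hL a b
  have hslack : 0 ≤ (120 + 32 * L) * C * E * decay ε 3 b * decay ε 2 a := by
    have := decay_pos (n := 2) (x := a) hε
    positivity
  calc _ ≤ _ := (abs_add_le _ _).trans (add_le_add_right (abs_add_le _ _) _)
    _ ≤ (128 + 32 * L) * C * E * decay ε 3 b * (decay ε 2 (a - b) + decay ε 2 a) := by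
      linarith

end DecayEstimates

section PoissonKernel

/-- The Poisson kernel of the half plane at height `y`, without the factor `1 / π`. -/
def poisson (y t : ℝ) : ℝ := y / (t ^ 2 + y ^ 2)

/-- The kernel of `M`, up to the factor `1 / (2 * π)`, in the coordinates of `kernelAdjoint`: the
Poisson kernel with the height `X a` depending on the base point `a`, cut off at distance `r`. -/
def localizedPoisson (ψ : ℝ → ℝ) (r : ℝ) (X : ℝ → ℝ) (a t : ℝ) : ℝ :=
  poisson (X a) t * scut ψ r a * scut ψ r t

/-- On `[-r, r]`, the function `X` is comparable to `ε`, and its derivative is at most of the order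
of that of a function which varies on the scale `ε + |a|`. -/
structure IsHeight (ε r B : ℝ) (X : ℝ → ℝ) : Prop where
  contDiffAt : ∀ a, |a| ≤ r → ContDiffAt ℝ 1 X a
  le_apply : ∀ a, |a| ≤ r → ε ≤ X a
  apply_le : ∀ a, |a| ≤ r → X a ≤ B * ε
  abs_deriv_le : ∀ a, |a| ≤ r → |deriv X a| ≤ B * ε / (ε + |a|)

variable {ε B L q r t y a : ℝ} {X ψ : ℝ → ℝ}

lemma add_abs_sq_le (y t : ℝ) : (y + |t|) ^ 2 ≤ 2 * (t ^ 2 + y ^ 2) := by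
  have := add_sq_le (a := y) (b := |t|)
  rw [sq_abs] at this
  linarith

lemma inv_sq_add_sq_le (hy : 0 < y) : (t ^ 2 + y ^ 2)⁻¹ ≤ 2 / (y + |t|) ^ 2 := by
  rw [inv_eq_one_div, div_le_div_iff₀ (by positivity) (by positivity), one_mul]
  exact add_abs_sq_le y t

lemma abs_poisson_le (hy : 0 < y) : |poisson y t| ≤ 2 * decay y 2 t := by
  calc |poisson y t| = y * (t ^ 2 + y ^ 2)⁻¹ := by
        rw [poisson, abs_of_nonneg (by positivity), div_eq_mul_inv]
    _ ≤ y * (2 / (y + |t|) ^ 2) := by gcongr; exact inv_sq_add_sq_le hy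
    _ = 2 * decay y 2 t := by rw [decay]; ring

lemma hasDerivAt_poisson_right (hy : 0 < y) (t : ℝ) :
    HasDerivAt (poisson y) (-(2 * t * y) / (t ^ 2 + y ^ 2) ^ 2) t := by
  have h := (hasDerivAt_const t y).div ((hasDerivAt_pow 2 t).add_const (y ^ 2))
    (by positivity : t ^ 2 + y ^ 2 ≠ 0)
  exact h.congr_deriv (by simp [mul_comm])

lemma hasDerivAt_poisson_left (hy : 0 < y) (t : ℝ) :
    HasDerivAt (fun y => poisson y t) ((t ^ 2 - y ^ 2) / (t ^ 2 + y ^ 2) ^ 2) y := by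
  have h := (hasDerivAt_id y).div ((hasDerivAt_pow 2 y).const_add (t ^ 2))
    (by positivity : t ^ 2 + y ^ 2 ≠ 0)
  exact h.congr_deriv (by simp; ring)

lemma abs_deriv_poisson_right_le (hy : 0 < y) : |deriv (poisson y) t| ≤ 8 * decay y 3 t := by
  calc |deriv (poisson y) t| = 2 * |t| * y * (t ^ 2 + y ^ 2)⁻¹ ^ 2 := by
        rw [(hasDerivAt_poisson_right hy t).deriv, neg_div, abs_neg, abs_div, abs_mul, abs_mul,
          abs_two, abs_of_pos hy, abs_of_pos (a := (t ^ 2 + y ^ 2) ^ 2) (by positivity),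
          div_eq_mul_inv, inv_pow]
    _ ≤ 2 * (y + |t|) * y * (2 / (y + |t|) ^ 2) ^ 2 := by
        gcongr
        · linarith
        · exact inv_sq_add_sq_le hy
    _ = 8 * decay y 3 t := by rw [decay]; field_simp; ring

lemma abs_deriv_poisson_left_le (hy : 0 < y) :
    |deriv (fun y => poisson y t) y| ≤ 2 / (y + |t|) ^ 2 := by
  have hle : |t ^ 2 - y ^ 2| ≤ t ^ 2 + y ^ 2 :=
    abs_le.2 ⟨by linarith [sq_nonneg t], by linarith [sq_nonneg y]⟩
  calc |deriv (fun y => poisson y t) y| = |t ^ 2 - y ^ 2| / (t ^ 2 + y ^ 2) ^ 2 := by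
        rw [(hasDerivAt_poisson_left hy t).deriv, abs_div,
          abs_of_nonneg (sq_nonneg (t ^ 2 + y ^ 2))]
    _ ≤ (t ^ 2 + y ^ 2) / (t ^ 2 + y ^ 2) ^ 2 := by gcongr
    _ = (t ^ 2 + y ^ 2)⁻¹ := by field_simp
    _ ≤ 2 / (y + |t|) ^ 2 := inv_sq_add_sq_le hy

namespace IsHeight

lemma pos (hX : IsHeight ε r B X) (hε : 0 < ε) (ha : |a| ≤ r) : 0 < X a :=
  hε.trans_le (hX.le_apply a ha)

lemma constant_nonneg (hX : IsHeight ε r B X) (hε : 0 < ε) (ha : |a| ≤ r) : 0 ≤ B :=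
  nonneg_of_mul_nonneg_left ((hX.pos hε ha).le.trans (hX.apply_le a ha)) hε

lemma abs_poisson_le (hX : IsHeight ε r B X) (hε : 0 < ε) (ha : |a| ≤ r) :
    |poisson (X a) t| ≤ 2 * B * decay ε 2 t := by
  have hdecay := decay_le_of_le_of_le (n := 2) (x := t) hε (hX.le_apply a ha) (hX.apply_le a ha)
  linarith [_root_.abs_poisson_le (t := t) (hX.pos hε ha)]

lemma abs_deriv_poisson_right_le (hX : IsHeight ε r B X) (hε : 0 < ε) (ha : |a| ≤ r) :
    |deriv (poisson (X a)) t| ≤ 8 * B * decay ε 3 t := by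
  have hdecay := decay_le_of_le_of_le (n := 3) (x := t) hε (hX.le_apply a ha) (hX.apply_le a ha)
  linarith [_root_.abs_deriv_poisson_right_le (t := t) (hX.pos hε ha)]

lemma hasDerivAt_poisson_left (hX : IsHeight ε r B X) (hε : 0 < ε) (ha : |a| ≤ r) (t : ℝ) :
    HasDerivAt (fun x => poisson (X x) t) (deriv (fun y => poisson y t) (X a) * deriv X a) a :=
  (_root_.hasDerivAt_poisson_left (hX.pos hε ha) t).differentiableAt.hasDerivAt.comp a
    ((hX.contDiffAt a ha).differentiableAt one_ne_zero).hasDerivAt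

lemma abs_deriv_poisson_left_le (hX : IsHeight ε r B X) (hε : 0 < ε) (ha : |a| ≤ r) :
    |deriv (fun y => poisson y t) (X a) * deriv X a| ≤ 2 * B * decay ε 2 t / (ε + |a|) := by
  calc |deriv (fun y => poisson y t) (X a) * deriv X a|
      ≤ 2 / (ε + |t|) ^ 2 * (B * ε / (ε + |a|)) := by
        rw [abs_mul]
        gcongr
        · refine (_root_.abs_deriv_poisson_left_le (hX.pos hε ha)).trans ?_
          gcongr
          exact hX.le_apply a ha
        · exact hX.abs_deriv_le a ha
    _ = 2 * B * decay ε 2 t / (ε + |a|) := by rw [decay]; ring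

end IsHeight

lemma localizedPoisson_eq_zero_left (hψ : IsCutoff ψ) (hr : 0 < r) (ha : r < |a|) :
    localizedPoisson ψ r X a t = 0 := by
  rw [localizedPoisson, hψ.scut_eq_zero hr ha, mul_zero, zero_mul]

lemma localizedPoisson_eq_zero_right (hψ : IsCutoff ψ) (hr : 0 < r) (ht : r < |t|) :
    localizedPoisson ψ r X a t = 0 := by
  rw [localizedPoisson, hψ.scut_eq_zero hr ht, mul_zero]

lemma abs_mul_scut_mul_scut_le (hψ : IsCutoff ψ) (p : ℝ) :
    |p * scut ψ r a * scut ψ r t| ≤ |p| := by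
  rw [abs_mul, abs_mul]
  exact (mul_le_of_le_one_right (by positivity) hψ.abs_scut_le_one).trans
    (mul_le_of_le_one_right (abs_nonneg p) hψ.abs_scut_le_one)

lemma contDiff_localizedPoisson (hε : 0 < ε) (hr : 0 < r) (hψ : IsCutoff ψ)
    (hX : IsHeight ε r B X) : ContDiff ℝ 1 (Function.uncurry (localizedPoisson ψ r X)) := by
  rw [contDiff_iff_contDiffAt]
  rintro ⟨a, t⟩
  rcases lt_or_ge r |a| with ha | ha
  · refine contDiffAt_const (c := (0 : ℝ)) |>.congr_of_eventuallyEq ?_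
    filter_upwards [continuous_fst.continuousAt.eventually (eventually_lt_abs ha)] with p hp
    exact localizedPoisson_eq_zero_left hψ hr hp
  · have hXa : ContDiffAt ℝ 1 (fun p : ℝ × ℝ => X p.1) (a, t) :=
      (hX.contDiffAt a ha).comp (a, t) contDiffAt_fst
    have hpos := hX.pos hε ha
    have hpoisson : ContDiffAt ℝ 1 (fun p : ℝ × ℝ => poisson (X p.1) p.2) (a, t) :=
      hXa.div ((contDiffAt_snd.pow 2).add (hXa.pow 2)) (by positivity)
    exact (hpoisson.mul ((hψ.contDiff_scut r).comp contDiff_fst).contDiffAt).mul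
      ((hψ.contDiff_scut r).comp contDiff_snd).contDiffAt

lemma abs_localizedPoisson_le (hε : 0 < ε) (hψ : IsCutoff ψ) (hX : IsHeight ε r B X)
    (ha : |a| ≤ r) : |localizedPoisson ψ r X a t| ≤ 2 * B * decay ε 2 t :=
  (abs_mul_scut_mul_scut_le hψ _).trans (hX.abs_poisson_le hε ha)

lemma abs_deriv_mul_scut_mul_const_le (hε : 0 < ε) (hr : 0 < r) (hεr : ε ≤ q * r)
    (hψ : IsCutoff ψ) (hL : ∀ x, |deriv ψ x| ≤ L) {p : ℝ → ℝ} {p' c x : ℝ}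
    (hp : HasDerivAt p p' x) (hc : |c| ≤ 1) :
    |deriv (fun x => p x * scut ψ r x * c) x| ≤ |p'| + |p x| * ((1 + q) * L / (ε + |x|)) := by
  have hscut : HasDerivAt (scut ψ r) (deriv (scut ψ r) x) x :=
    ((hψ.contDiff_scut r).differentiable one_ne_zero x).hasDerivAt
  have hderiv : deriv (fun x => p x * scut ψ r x * c) x =
      (p' * scut ψ r x + p x * deriv (scut ψ r) x) * c := ((hp.mul hscut).mul_const c).deriv
  rw [hderiv, abs_mul]
  refine (mul_le_of_le_one_right (abs_nonneg _) hc).trans ((abs_add_le _ _).trans ?_)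
  rw [abs_mul, abs_mul]
  gcongr
  · exact mul_le_of_le_one_right (abs_nonneg _) hψ.abs_scut_le_one
  · exact hψ.abs_deriv_scut_le_div_add hL hε hr hεr

lemma abs_deriv_localizedPoisson_right_le (hε : 0 < ε) (hr : 0 < r) (hεr : ε ≤ q * r)
    (hψ : IsCutoff ψ) (hL : ∀ x, |deriv ψ x| ≤ L) (hX : IsHeight ε r B X) (ha : |a| ≤ r) :
    |deriv (localizedPoisson ψ r X a) t| ≤ B * (8 + 2 * ((1 + q) * L)) * decay ε 3 t := by
  have hL0 : 0 ≤ L := (abs_nonneg _).trans (hL 0)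
  have hq : 0 < q := pos_of_mul_pos_left (hε.trans_le hεr) hr.le
  have hcomm : localizedPoisson ψ r X a = fun t => poisson (X a) t * scut ψ r t * scut ψ r a :=
    funext fun t => mul_right_comm _ _ _
  calc |deriv (localizedPoisson ψ r X a) t|
      ≤ |deriv (poisson (X a)) t| + |poisson (X a) t| * ((1 + q) * L / (ε + |t|)) := by
        rw [hcomm]
        exact abs_deriv_mul_scut_mul_const_le hε hr hεr hψ hL
          (hasDerivAt_poisson_right (hX.pos hε ha) t).differentiableAt.hasDerivAt
          hψ.abs_scut_le_one
    _ ≤ 8 * B * decay ε 3 t + 2 * B * decay ε 2 t * ((1 + q) * L / (ε + |t|)) := by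
        gcongr
        · exact hX.abs_deriv_poisson_right_le hε ha
        · exact hX.abs_poisson_le hε ha
    _ = B * (8 + 2 * ((1 + q) * L)) * decay ε 3 t := by rw [decay_succ (n := 2)]; ring

lemma abs_deriv_localizedPoisson_left_le (hε : 0 < ε) (hr : 0 < r) (hεr : ε ≤ q * r)
    (hψ : IsCutoff ψ) (hL : ∀ x, |deriv ψ x| ≤ L) (hX : IsHeight ε r B X) (ha : |a| ≤ r) :
    |deriv (fun x => localizedPoisson ψ r X x t) a| ≤
      B * (2 + 2 * ((1 + q) * L)) * decay ε 2 t / (ε + |a|) := by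
  have hL0 : 0 ≤ L := (abs_nonneg _).trans (hL 0)
  have hq : 0 < q := pos_of_mul_pos_left (hε.trans_le hεr) hr.le
  calc |deriv (fun x => localizedPoisson ψ r X x t) a|
      ≤ |deriv (fun y => poisson y t) (X a) * deriv X a| +
          |poisson (X a) t| * ((1 + q) * L / (ε + |a|)) :=
        abs_deriv_mul_scut_mul_const_le hε hr hεr hψ hL (hX.hasDerivAt_poisson_left hε ha t)
          hψ.abs_scut_le_one
    _ ≤ 2 * B * decay ε 2 t / (ε + |a|) +
          2 * B * decay ε 2 t * ((1 + q) * L / (ε + |a|)) := by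
        gcongr
        · exact hX.abs_deriv_poisson_left_le hε ha
        · exact hX.abs_poisson_le hε ha
    _ = B * (2 + 2 * ((1 + q) * L)) * decay ε 2 t / (ε + |a|) := by ring

lemma isPoissonLike_of_abs_le (hε : 0 < ε) {C : ℝ} (hC : 0 ≤ C) {K : ℝ → ℝ → ℝ}
    (hK : ContDiff ℝ 1 (Function.uncurry K)) (hzero : ∀ a, r < |a| → K a = 0)
    (habs : ∀ a t, |a| ≤ r → |K a t| ≤ C * decay ε 2 t)
    (hleft : ∀ a t, |a| ≤ r → |deriv (fun x => K x t) a| ≤ C * decay ε 2 t / (ε + |a|))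
    (hright : ∀ a t, |a| ≤ r → |deriv (K a) t| ≤ C * decay ε 3 t) :
    IsPoissonLike ε C K := by
  have hdecay : ∀ n t, 0 ≤ C * decay ε n t := fun n t => mul_nonneg hC (decay_pos hε).le
  refine ⟨hK, fun a t => ?_, fun a t => ?_, fun a t => ?_⟩ <;>
    rcases le_or_gt |a| r with ha | ha
  · exact habs a t ha
  · rw [hzero a ha, Pi.zero_apply, abs_zero]
    exact hdecay 2 t
  · exact hleft a t ha
  · have h : (fun x => K x t) =ᶠ[nhds a] fun _ => 0 :=
      (eventually_lt_abs ha).mono fun x hx => congrFun (hzero x hx) t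
    rw [h.deriv_eq, deriv_const, abs_zero]
    exact div_nonneg (hdecay 2 t) (by positivity)
  · exact hright a t ha
  · rw [hzero a ha, deriv_zero, Pi.zero_apply, abs_zero]
    exact hdecay 3 t

theorem isPoissonLike_localizedPoisson (hε : 0 < ε) (hr : 0 < r) (hεr : ε ≤ q * r)
    (hψ : IsCutoff ψ) (hL : ∀ x, |deriv ψ x| ≤ L) (hX : IsHeight ε r B X) :
    IsPoissonLike ε (B * (8 + 2 * ((1 + q) * L))) (localizedPoisson ψ r X) := by
  have hL0 : 0 ≤ L := (abs_nonneg _).trans (hL 0)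
  have hq : 0 < q := pos_of_mul_pos_left (hε.trans_le hεr) hr.le
  have hB : 0 ≤ B := hX.constant_nonneg hε (a := 0) (by simpa using hr.le)
  have hM : 0 ≤ (1 + q) * L := by positivity
  have hdecay : ∀ t, 0 < decay ε 2 t := fun t => decay_pos hε
  refine isPoissonLike_of_abs_le hε (by positivity) (contDiff_localizedPoisson hε hr hψ hX)
    (fun a ha => funext fun t => localizedPoisson_eq_zero_left hψ hr ha)
    (fun a t ha => (abs_localizedPoisson_le hε hψ hX ha).trans ?_)
    (fun a t ha => (abs_deriv_localizedPoisson_left_le hε hr hεr hψ hL hX ha).trans ?_)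
    (fun a t ha => abs_deriv_localizedPoisson_right_le hε hr hεr hψ hL hX ha)
  · have := (hdecay t).le
    rw [mul_comm 2 B]
    gcongr
    linarith
  · have := (hdecay t).le
    gcongr
    norm_num

end PoissonKernel

section CriticalPoint

variable {E : Type*} [NormedAddCommGroup E] [NormedSpace ℝ E] {f : ℝ → E} {s : Set ℝ} {A x₀ x : ℝ}

lemma norm_derivWithin_le_of_norm_iteratedDerivWithin_two_le (hs : Convex ℝ s)
    (hs' : UniqueDiffOn ℝ s) (hf : ContDiffOn ℝ 2 f s) (hx₀ : x₀ ∈ s)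
    (hcrit : derivWithin f s x₀ = 0) (hA : ∀ y ∈ s, ‖iteratedDerivWithin 2 f s y‖ ≤ A)
    (hx : x ∈ s) : ‖derivWithin f s x‖ ≤ A * |x - x₀| := by
  have hdiff : DifferentiableOn ℝ (derivWithin f s) s :=
    (hf.derivWithin hs' (m := 1) (by norm_num)).differentiableOn one_ne_zero
  have hA' : ∀ y ∈ s, ‖derivWithin (derivWithin f s) s y‖ ≤ A := fun y hy => by
    simpa only [iteratedDerivWithin_succ, iteratedDerivWithin_zero] using hA y hy
  simpa only [hcrit, sub_zero, Real.norm_eq_abs] using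
    hs.norm_image_sub_le_of_norm_derivWithin_le hdiff hA' hx₀ hx

lemma norm_sub_le_of_norm_iteratedDerivWithin_two_le (hs : Convex ℝ s)
    (hs' : UniqueDiffOn ℝ s) (hf : ContDiffOn ℝ 2 f s) (hx₀ : x₀ ∈ s)
    (hcrit : derivWithin f s x₀ = 0) (hA : ∀ y ∈ s, ‖iteratedDerivWithin 2 f s y‖ ≤ A)
    (hx : x ∈ s) : ‖f x - f x₀‖ ≤ A * (x - x₀) ^ 2 := by
  have hA0 : 0 ≤ A := (norm_nonneg _).trans (hA x₀ hx₀)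
  have hderiv : ∀ y ∈ s ∩ Metric.closedBall x₀ |x - x₀|,
      HasDerivWithinAt f (derivWithin f s y) (s ∩ Metric.closedBall x₀ |x - x₀|) y := fun y hy =>
    (hf.differentiableOn two_ne_zero y hy.1).hasDerivWithinAt.mono inter_subset_left
  have hbound : ∀ y ∈ s ∩ Metric.closedBall x₀ |x - x₀|,
      ‖derivWithin f s y‖ ≤ A * |x - x₀| := fun y hy =>
    (norm_derivWithin_le_of_norm_iteratedDerivWithin_two_le hs hs' hf hx₀ hcrit hA hy.1).trans
      (mul_le_mul_of_nonneg_left hy.2 hA0)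
  calc ‖f x - f x₀‖ ≤ A * |x - x₀| * ‖x - x₀‖ :=
        (hs.inter (convex_closedBall _ _)).norm_image_sub_le_of_norm_hasDerivWithin_le hderiv hbound
          ⟨hx₀, Metric.mem_closedBall_self (abs_nonneg _)⟩ ⟨hx, Metric.mem_closedBall.2 le_rfl⟩
    _ = A * (x - x₀) ^ 2 := by rw [Real.norm_eq_abs, mul_assoc, abs_mul_abs_self, sq]

end CriticalPoint

lemma zero_mem_Ioo_of_abs_lt {δ x : ℝ} (hx : |x| < δ) : (0 : ℝ) ∈ Ioo (-δ) δ := by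
  have hδ := (abs_nonneg x).trans_lt hx
  exact ⟨neg_neg_of_pos hδ, hδ⟩

namespace GoodFG

variable {δ A ε r q a x : ℝ} {f g : ℝ → ℝ}

lemma symm (h : GoodFG δ A ε f g) : GoodFG δ A ε g f := by
  obtain ⟨hf, hg, hf0, hg0, hf1, hg1, hA, hpos⟩ := h
  refine ⟨hg, hf, hg0, hf0, hg1, hf1, fun x hx i hi => ?_, fun a ha b hb => ?_⟩
  · rw [add_comm]
    exact hA x hx i hi
  · rw [add_comm]
    exact hpos b hb a ha

lemma contDiffAt_left (h : GoodFG δ A ε f g) (hx : |x| < δ) : ContDiffAt ℝ 1 f x :=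
  (h.1.contDiffAt (isOpen_Ioo.mem_nhds (abs_lt.1 hx))).of_le (by norm_num)

lemma abs_iteratedDerivWithin_two_left_le (h : GoodFG δ A ε f g) :
    ∀ x ∈ Ioo (-δ) δ, |iteratedDerivWithin 2 f (Ioo (-δ) δ) x| ≤ A := fun x hx =>
  (le_add_of_nonneg_right (abs_nonneg _)).trans (h.2.2.2.2.2.2.1 x hx 2 (by norm_num))

lemma abs_deriv_left_le (h : GoodFG δ A ε f g) (hx : |x| < δ) : |deriv f x| ≤ A * |x| := by
  rw [← derivWithin_of_isOpen isOpen_Ioo (abs_lt.1 hx)]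
  simpa only [sub_zero, Real.norm_eq_abs] using
    norm_derivWithin_le_of_norm_iteratedDerivWithin_two_le (convex_Ioo _ _)
      isOpen_Ioo.uniqueDiffOn (h.1.of_le (by norm_num)) (zero_mem_Ioo_of_abs_lt hx) h.2.2.2.2.1
      h.abs_iteratedDerivWithin_two_left_le (abs_lt.1 hx)

lemma abs_left_le (h : GoodFG δ A ε f g) (hx : |x| < δ) : |f x| ≤ A * x ^ 2 := by
  simpa only [sub_zero, Real.norm_eq_abs, h.2.2.1] using
    norm_sub_le_of_norm_iteratedDerivWithin_two_le (convex_Ioo _ _)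
      isOpen_Ioo.uniqueDiffOn (h.1.of_le (by norm_num)) (zero_mem_Ioo_of_abs_lt hx) h.2.2.2.2.1
      h.abs_iteratedDerivWithin_two_left_le (abs_lt.1 hx)

lemma constant_nonneg (h : GoodFG δ A ε f g) (hx : |x| < δ) : 0 ≤ A :=
  (abs_nonneg _).trans (h.abs_iteratedDerivWithin_two_left_le 0 (zero_mem_Ioo_of_abs_lt hx))

lemma Xt_le_s10 (h : GoodFG δ A ε f g) (ha : |a| < δ) (haε : a ^ 2 ≤ ε) :
    Xt ε f g a ≤ (2 + 2 * A) * ε := by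
  have hAa : A * a ^ 2 ≤ A * ε := mul_le_mul_of_nonneg_left haε (h.constant_nonneg ha)
  have hf := (le_abs_self _).trans (h.abs_left_le ha)
  have hg := (le_abs_self _).trans (h.symm.abs_left_le ha)
  rw [Xt]
  linarith

lemma abs_deriv_Xt_le (h : GoodFG δ A ε f g) (ha : |a| < δ) :
    |deriv (Xt ε f g) a| ≤ 2 * A * |a| := by
  have hf := ((h.contDiffAt_left ha).differentiableAt one_ne_zero).hasDerivAt
  have hg := ((h.symm.contDiffAt_left ha).differentiableAt one_ne_zero).hasDerivAt
  have hX : HasDerivAt (Xt ε f g) (deriv f a + deriv g a) a := (hf.const_add (2 * ε)).add hg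
  rw [hX.deriv]
  linarith [abs_add_le (deriv f a) (deriv g a), h.abs_deriv_left_le ha,
    h.symm.abs_deriv_left_le ha]

theorem isHeight_Xt (h : GoodFG δ A ε f g) (hε : 0 < ε) (hr : 0 < r) (hrε : r ≤ √ε)
    (hrδ : r < δ) (hεr : ε ≤ q * r) : IsHeight ε r (2 + 2 * A * (1 + q)) (Xt ε f g) := by
  have hA := h.constant_nonneg (x := 0) (by simpa using hr.trans hrδ)
  have hq : 0 < q := pos_of_mul_pos_left (hε.trans_le hεr) hr.le
  have hsq : r ^ 2 ≤ ε := (Real.le_sqrt' hr).1 hrε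
  refine ⟨fun a ha => ?_, fun a ha => ?_, fun a ha => ?_, fun a ha => ?_⟩
  · exact (contDiffAt_const.add (h.contDiffAt_left (ha.trans_lt hrδ))).add
      (h.symm.contDiffAt_left (ha.trans_lt hrδ))
  · have hmem : a ∈ Ioo (-(4 * √ε)) (4 * √ε) := abs_lt.1 (by linarith)
    have := h.2.2.2.2.2.2.2 a hmem a hmem
    rw [Xt]
    linarith
  · have haε : a ^ 2 ≤ ε := (sq_le_sq' (abs_le.1 ha).1 (abs_le.1 ha).2).trans hsq
    refine (h.Xt_le_s10 (ha.trans_lt hrδ) haε).trans ?_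
    have : 0 ≤ A * q * ε := by positivity
    linarith
  · refine (h.abs_deriv_Xt_le (ha.trans_lt hrδ)).trans ((le_div_iff₀ (by positivity)).2 ?_)
    calc 2 * A * |a| * (ε + |a|) ≤ 2 * A * r * (q * r + r) := by gcongr
      _ = 2 * A * (1 + q) * r ^ 2 := by ring
      _ ≤ 2 * A * (1 + q) * ε := by gcongr
      _ ≤ (2 + 2 * A * (1 + q)) * ε := by linarith

end GoodFG

section AdjointOperator

variable {δ A ε r C E L b : ℝ} {f g φ ψ N : ℝ → ℝ}

lemma InC2.isConcentrated (hφ : InC2 δ ε φ) (hε : 0 < ε) : IsConcentrated ε 4 φ := by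
  obtain ⟨hdiff, hcompact, hsupport, hbound⟩ := hφ
  refine ⟨hdiff, hcompact, fun a => ?_, fun a => ?_⟩ <;>
    rcases em (a ∈ tsupport φ) with ha | ha
  · have hd := decay_pos (n := 2) (x := a) hε
    linarith [(hbound a (hsupport ha)).1, div_add_le_decay (n := 2) (x := a) hε]
  · rw [image_eq_zero_of_notMem_tsupport ha, abs_zero]
    exact mul_nonneg zero_le_four (decay_pos hε).le
  · have := div_add_le_decay (n := 3) (x := a) hε
    linarith [(hbound a (hsupport ha)).2]
  · rw [image_eq_zero_of_notMem_tsupport fun h => ha (tsupport_deriv_subset h), abs_zero]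
    exact mul_nonneg zero_le_four (decay_pos hε).le

namespace IsConcentrated

lemma mono {E' : ℝ} (hN : IsConcentrated ε E N) (hε : 0 < ε) (hE : E ≤ E') :
    IsConcentrated ε E' N :=
  ⟨hN.contDiff, hN.hasCompactSupport,
    fun a => (hN.abs_le a).trans (mul_le_mul_of_nonneg_right hE (decay_pos hε).le),
    fun a => (hN.abs_deriv_le a).trans (mul_le_mul_of_nonneg_right hE (decay_pos hε).le)⟩

lemma abs_le_div_add (hN : IsConcentrated ε E N) (hε : 0 < ε) (b : ℝ) :
    |N b| ≤ E * (ε / (ε ^ 2 + |b| ^ 2)) :=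
  (hN.abs_le b).trans (mul_le_mul_of_nonneg_left (decay_le_div_add hε two_ne_zero) (hN.nonneg hε))

lemma abs_deriv_le_div_add (hN : IsConcentrated ε E N) (hε : 0 < ε) (b : ℝ) :
    |deriv N b| ≤ E * (ε / (ε ^ 3 + |b| ^ 3)) :=
  (hN.abs_deriv_le b).trans
    (mul_le_mul_of_nonneg_left (decay_le_div_add hε three_ne_zero) (hN.nonneg hε))

lemma inC2_inv_mul (hN : IsConcentrated ε E N) (hε : 0 < ε) (hE : 0 < E) (hr : r < δ)
    (hzero : ∀ b, r < |b| → N b = 0) : InC2 δ ε fun b => E⁻¹ * N b := by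
  have hsupport : Function.support (fun b => E⁻¹ * N b) ⊆ Icc (-r) r := fun b hb =>
    _root_.abs_le.1 (not_lt.1 fun h => hb (by simp only [hzero b h, mul_zero]))
  refine ⟨contDiff_const.mul hN.contDiff, hN.hasCompactSupport.mul_left,
    (closure_minimal hsupport isClosed_Icc).trans (Icc_subset_Ioo (neg_lt_neg hr) hr),
    fun b _ => ⟨?_, ?_⟩⟩
  · rw [abs_mul, abs_of_pos (inv_pos.2 hE), inv_mul_le_iff₀ hE]
    exact hN.abs_le_div_add hε b
  · rw [deriv_const_mul _ (hN.contDiff.differentiable one_ne_zero b), abs_mul,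
      abs_of_pos (inv_pos.2 hE), inv_mul_le_iff₀ hE]
    exact hN.abs_deriv_le_div_add hε b

end IsConcentrated

lemma Mstar_eq_kernelAdjoint : Mstar ψ ε f g φ = fun b =>
    (2 * π)⁻¹ * kernelAdjoint (localizedPoisson ψ (√ε / 2 ^ 6) (Xt ε f g)) φ b := rfl

lemma abs_inv_two_pi_mul_le {x c : ℝ} (h : |x| ≤ 2 * π * c) : |(2 * π)⁻¹ * x| ≤ c := by
  rwa [abs_mul, abs_of_pos (inv_pos.2 two_pi_pos), inv_mul_le_iff₀ two_pi_pos]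

lemma Mstar_eq_zero (hψ : IsCutoff ψ) (hε : 0 < ε) (hb : √ε / 2 ^ 5 < |b|) :
    Mstar ψ ε f g φ b = 0 := by
  have hr : 0 < √ε / 2 ^ 6 := by positivity
  have hzero : ∀ a, localizedPoisson ψ (√ε / 2 ^ 6) (Xt ε f g) a (a - b) = 0 := by
    intro a
    rcases lt_or_ge (√ε / 2 ^ 6) |a| with ha | ha
    · exact localizedPoisson_eq_zero_left hψ hr ha
    · refine localizedPoisson_eq_zero_right hψ hr ?_
      have := abs_sub_abs_le_abs_sub b a
      rw [abs_sub_comm b a] at this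
      linarith
  simp only [Mstar_eq_kernelAdjoint, kernelAdjoint, hzero, zero_mul, integral_zero, mul_zero]

lemma hasCompactSupport_Mstar (hψ : IsCutoff ψ) (hε : 0 < ε) :
    HasCompactSupport (Mstar ψ ε f g φ) :=
  HasCompactSupport.intro isCompact_Icc fun _ hb =>
    Mstar_eq_zero hψ hε (not_le.1 fun h => hb (abs_le.1 h))

theorem isConcentrated_Mstar (hε : 0 < ε) (hψ : IsCutoff ψ) (hL : ∀ x, |deriv ψ x| ≤ L)
    (hK : IsPoissonLike ε C (localizedPoisson ψ (√ε / 2 ^ 6) (Xt ε f g)))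
    (hφ : IsConcentrated ε E φ) :
    IsConcentrated ε ((128 + 32 * L) * C * E) (Mstar ψ ε f g φ) := by
  have hL0 : 0 ≤ L := (abs_nonneg _).trans (hL 0)
  have hC := hK.nonneg hε
  have hE := hφ.nonneg hε
  have hdiff := contDiff_kernelAdjoint hK.contDiff hφ.contDiff.continuous hφ.hasCompactSupport
  refine ⟨contDiff_const.mul hdiff, hasCompactSupport_Mstar hψ hε, fun b => ?_, fun b => ?_⟩
  · have hd := decay_pos (n := 2) (x := b) hε
    calc |Mstar ψ ε f g φ b| ≤ 4 * C * E * decay ε 2 b :=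
          abs_inv_two_pi_mul_le (abs_kernelAdjoint_le hε hK hφ b)
      _ ≤ (128 + 32 * L) * C * E * decay ε 2 b := by gcongr; linarith
  · rw [Mstar_eq_kernelAdjoint, deriv_const_mul _ (hdiff.differentiable one_ne_zero b)]
    exact abs_inv_two_pi_mul_le (abs_deriv_kernelAdjoint_le hε hK hφ hψ hL b)

lemma sqrt_le_div_ten (hδ : 0 < δ) (hε : ε ≤ δ ^ 2 / 100) : √ε ≤ δ / 10 :=
  Real.sqrt_le_iff.2 ⟨by positivity, by linarith⟩

/-- The constant of `GoodFG.isPoissonLike`, where `L` bounds the derivative of the cutoff. -/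
def poissonConst (δ A L : ℝ) : ℝ :=
  (2 + 2 * A * (1 + 7 * δ)) * (8 + 2 * ((1 + 7 * δ) * L))

lemma GoodFG.isPoissonLike (h : GoodFG δ A ε f g) (hδ : 0 < δ) (hε : ε ∈ Ioc 0 (δ ^ 2 / 100))
    (hψ : IsCutoff ψ) (hL : ∀ x, |deriv ψ x| ≤ L) :
    IsPoissonLike ε (poissonConst δ A L) (localizedPoisson ψ (√ε / 2 ^ 6) (Xt ε f g)) := by
  have hsqrt := sqrt_le_div_ten hδ hε.2
  have hsqrt0 : 0 < √ε := Real.sqrt_pos.2 hε.1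
  have hεr : ε ≤ 7 * δ * (√ε / 2 ^ 6) := by
    have hmul := mul_le_mul_of_nonneg_right hsqrt hsqrt0.le
    rw [Real.mul_self_sqrt hε.1.le] at hmul
    linarith [mul_pos hδ hsqrt0]
  exact isPoissonLike_localizedPoisson hε.1 (by positivity) hεr hψ hL
    (h.isHeight_Xt hε.1 (by positivity) (by linarith) (by linarith) hεr)

end AdjointOperator

theorem Mstar_preserves_C2_general (δ A : ℝ) (hδ : 0 < δ) (ψ : ℝ → ℝ) (hψ : IsCutoff ψ) :
    ∃ A1 : ℝ, 0 < A1 ∧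
      ∀ ε : ℝ, ε ∈ Ioc (0:ℝ) (δ ^ 2 / 100) →
      ∀ f g : ℝ → ℝ, GoodFG δ A ε f g →
      ∀ φ : ℝ → ℝ, InC2 δ ε φ →
        InC2 δ ε (fun β => A1⁻¹ * Mstar ψ ε f g φ β) ∧
        ∀ β : ℝ,
          |Mstar ψ ε f g φ β| ≤ A1 * (ε / (ε ^ 2 + β ^ 2)) ∧
          |deriv (Mstar ψ ε f g φ) β| ≤ A1 * (ε / (ε ^ 3 + |β| ^ 3)) := by
  obtain ⟨L, hL⟩ := hψ.exists_abs_deriv_le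
  set A1 := |(128 + 32 * L) * poissonConst δ A L * 4| + 1
  have hA1 : 0 < A1 := by positivity
  refine ⟨A1, hA1, fun ε hε f g hfg φ hφ => ?_⟩
  have hle : (128 + 32 * L) * poissonConst δ A L * 4 ≤ A1 :=
    (le_abs_self _).trans (le_add_of_nonneg_right zero_le_one)
  have hM : IsConcentrated ε A1 (Mstar ψ ε f g φ) :=
    (isConcentrated_Mstar hε.1 hψ hL (hfg.isPoissonLike hδ hε hψ hL)
      (hφ.isConcentrated hε.1)).mono hε.1 hle
  have hr : √ε / 2 ^ 5 < δ := by linarith [sqrt_le_div_ten hδ hε.2]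
  refine ⟨hM.inC2_inv_mul hε.1 hA1 hr fun _ => Mstar_eq_zero hψ hε.1, fun β => ⟨?_, ?_⟩⟩
  · rw [← sq_abs β]
    exact hM.abs_le_div_add hε.1 β
  · exact hM.abs_deriv_le_div_add hε.1 β

/-- **`M*` preserves the class `C₂` up to a constant (Lemma 3.2(ii), estimate (3.12)).**  There is
`A₁ > 0` depending only on `A` and `δ` (and `ψ`) with `A₁⁻¹ M*φ ∈ C₂` for every `φ ∈ C₂`; in
particular `|M*φ(β)| ≲ ε/(ε²+β²)` and `|(M*φ)'(β)| ≲ ε/(ε³+|β|³)` for `|β| ≤ √ε`. -/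
theorem Mstar_preserves_C2 (δ A : ℝ) (hδ : δ ∈ Ioc (0:ℝ) (1/100)) (hA : 1 ≤ A)
    (ψ : ℝ → ℝ) (hψ : IsCutoff ψ) :
    ∃ A1 : ℝ, 0 < A1 ∧
      ∀ ε : ℝ, ε ∈ Ioc (0:ℝ) (δ ^ 2 / 100) →
      ∀ f g : ℝ → ℝ, GoodFG δ A ε f g →
      ∀ φ : ℝ → ℝ, InC2 δ ε φ →
        InC2 δ ε (fun β => A1⁻¹ * Mstar ψ ε f g φ β) ∧
        ∀ β : ℝ, |β| ≤ Real.sqrt ε →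
          |Mstar ψ ε f g φ β| ≤ A1 * (ε / (ε ^ 2 + β ^ 2)) ∧
          |deriv (Mstar ψ ε f g φ) β| ≤ A1 * (ε / (ε ^ 3 + |β| ^ 3)) := by
  obtain ⟨A1, hA1, h⟩ := Mstar_preserves_C2_general δ A hδ.1 ψ hψ
  exact ⟨A1, hA1, fun ε hε f g hfg φ hφ =>
    (h ε hε f g hfg φ hφ).imp_right fun hM β _ => hM β⟩
end
end
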